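/- arXiv:2206.10040 — 6 statements merged into one kernel-verified Lean document; each statement's English description precedes it below -/
import Mathlib

section
/- Let p > 0, q > 0 be integers, μ = 2πp/q, and let f : ℝ → ℝ be 2π-periodic and real-analytic. Then there exist ε̄ > 0 and a function Y : ℝ × (−ε̄, ε̄) → ℝ, real-analytic in its second argument with Y(x, 0) = 0 for all x, such that: (i) for all ε, δ with |ε| < ε̄ and |δ| < ε̄, every p/q periodic point (x₀, v₀) of F_{ε,δ} satisfies v₀ = μ + Y(x₀, ε); and (ii) for every x, ∂Y/∂ε(x, 0) = −((q+1)/2)·f̄(x) + f̿(x). -/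
/-!
Let `μ = 2πp/q` and write `(x_k, v_k)` for the orbit of `(x, v)`. Telescoping gives
`v_q = v - qδ - ε ∑_{k<q} f (x_k)` and
`x_q = x + qv - δ q(q+1)/2 - ε ∑_{k<q} (q-k) f (x_k)`, so `(x, v)` is `p/q` periodic exactly when
the two components of `defect` vanish (`iterate_eq_iff_defect`). At `ε = 0` the defect is an
invertible affine function of `(v, δ)`, with zero `(μ, 0)`. The analytic implicit function theorem
therefore solves `defect = 0` near `(μ, 0)` by a unique `(v, δ) = y ε`, analytic in `ε`, with a
radius that is locally uniform in `x` (`eventually_isSolutionGerm`) and hence, by compactness of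
`[0, 2π]` and periodicity, uniform in `x` (`exists_uniform_radius`).

Since `f` is bounded, the vanishing of the defect forces `v - μ = O(|ε| + |δ|)`, so for small `ε`
and `δ` every periodic point lies in the region of uniqueness. Finally the equations read
`(y ε).1 = μ + ε * g ε`, where `g` is the analytic function
`-((q+1)/2) (1/q) ∑ f (x_k) + (1/q) ∑ (q-k) f (x_k)`; the derivative at `0` is `g 0`, and at
`ε = 0` the orbit is `x_k = x + kμ`.
-/

open Real

open scoped Topology ContDiff

/-- The cylinder map `F_{ε,δ}`. -/
def cylMap (f : ℝ → ℝ) (ε δ : ℝ) : ℝ × ℝ → ℝ × ℝ :=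
  fun z => (z.1 + z.2 - δ - ε * f z.1, z.2 - δ - ε * f z.1)

/-- The position `x_k` after `k` steps, as a function of `w = ((x, ε), (v, δ))`: the parameters
come first, the unknowns of the implicit function theorem second. -/
def pos (f : ℝ → ℝ) (k : ℕ) (w : (ℝ × ℝ) × (ℝ × ℝ)) : ℝ :=
  ((cylMap f w.1.2 w.2.2)^[k] (w.1.1, w.2.1)).1

/-- The sum `∑_{k<n} f (x_k)` along the orbit. -/
def sumF (f : ℝ → ℝ) (n : ℕ) (w : (ℝ × ℝ) × (ℝ × ℝ)) : ℝ :=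
  ∑ k ∈ Finset.range n, f (pos f k w)

/-- The weighted sum `∑_{k<n} (n - k) f (x_k)` along the orbit. -/
def sumW (f : ℝ → ℝ) (n : ℕ) (w : (ℝ × ℝ) × (ℝ × ℝ)) : ℝ :=
  ∑ k ∈ Finset.range n, ((n : ℝ) - k) * f (pos f k w)

theorem iterate_cylMap (f : ℝ → ℝ) (x ε v δ : ℝ) (n : ℕ) :
    (cylMap f ε δ)^[n] (x, v) =
      (x + n * v - δ * (n * (n + 1) / 2) - ε * sumW f n ((x, ε), (v, δ)),
        v - n * δ - ε * sumF f n ((x, ε), (v, δ))) := by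
  induction n with
  | zero => simp [sumW, sumF]
  | succ n ih =>
    have hstep : cylMap f ε δ ((cylMap f ε δ)^[n] (x, v)) =
        (((cylMap f ε δ)^[n] (x, v)).1 + ((cylMap f ε δ)^[n] (x, v)).2 - δ
            - ε * f (pos f n ((x, ε), (v, δ))),
          ((cylMap f ε δ)^[n] (x, v)).2 - δ - ε * f (pos f n ((x, ε), (v, δ)))) := rfl
    have hF : sumF f (n + 1) ((x, ε), (v, δ)) =
        sumF f n ((x, ε), (v, δ)) + f (pos f n ((x, ε), (v, δ))) := by
      simp [sumF, Finset.sum_range_succ]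
    have hW : sumW f (n + 1) ((x, ε), (v, δ)) =
        sumW f n ((x, ε), (v, δ)) + sumF f (n + 1) ((x, ε), (v, δ)) := by
      simp only [sumW, sumF]
      rw [Finset.sum_range_succ, Finset.sum_range_succ, ← add_assoc, ← Finset.sum_add_distrib]
      push_cast
      congr 1
      · exact Finset.sum_congr rfl fun k _ => by ring
      · ring
    rw [Function.iterate_succ_apply', hstep, ih, hW, hF]
    ext <;> (push_cast; ring)

theorem pos_eq (f : ℝ → ℝ) (x ε v δ : ℝ) (n : ℕ) :
    pos f n ((x, ε), (v, δ)) =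
      x + n * v - δ * (n * (n + 1) / 2) - ε * sumW f n ((x, ε), (v, δ)) := by
  rw [pos]
  simp only [iterate_cylMap]

/-- The amount by which the orbit fails to be `p/q` periodic: first the defect `v_q - v` in the
velocity, then the defect `x_q - (x + 2πp)` in the position. -/
noncomputable def defect (f : ℝ → ℝ) (p q : ℕ) (w : (ℝ × ℝ) × (ℝ × ℝ)) : ℝ × ℝ :=
  (-(q * w.2.2) - w.1.2 * sumF f q w,
    q * w.2.1 - 2 * π * p - w.2.2 * (q * (q + 1) / 2) - w.1.2 * sumW f q w)

theorem iterate_eq_iff_defect (f : ℝ → ℝ) (p q : ℕ) (x ε v δ : ℝ) :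
    (cylMap f ε δ)^[q] (x, v) = (x + 2 * π * p, v) ↔ defect f p q ((x, ε), (v, δ)) = 0 := by
  rw [iterate_cylMap, defect, Prod.mk_eq_zero, Prod.mk.injEq]
  constructor <;> rintro ⟨h1, h2⟩ <;> constructor <;> linarith

theorem contDiff_pos {f : ℝ → ℝ} (hf : ContDiff ℝ ω f) (k : ℕ) : ContDiff ℝ ω (pos f k) := by
  suffices h : ContDiff ℝ ω (fun w : (ℝ × ℝ) × (ℝ × ℝ) =>
      (cylMap f w.1.2 w.2.2)^[k] (w.1.1, w.2.1)) from h.fst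
  induction k with
  | zero => simp only [Function.iterate_zero, id]; fun_prop
  | succ k ih =>
    simp only [Function.iterate_succ_apply']
    simp only [cylMap] at ih ⊢
    fun_prop

theorem contDiff_sumF {f : ℝ → ℝ} (hf : ContDiff ℝ ω f) (n : ℕ) : ContDiff ℝ ω (sumF f n) :=
  ContDiff.sum fun k _ => hf.comp (contDiff_pos hf k)

theorem contDiff_sumW {f : ℝ → ℝ} (hf : ContDiff ℝ ω f) (n : ℕ) : ContDiff ℝ ω (sumW f n) :=
  ContDiff.sum fun k _ => contDiff_const.mul (hf.comp (contDiff_pos hf k))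

theorem contDiff_defect {f : ℝ → ℝ} (hf : ContDiff ℝ ω f) (p q : ℕ) :
    ContDiff ℝ ω (defect f p q) := by
  have := contDiff_sumF hf q
  have := contDiff_sumW hf q
  unfold defect
  fun_prop

/-- At `ε = 0` the defect is affine in the unknowns, which gives its partial derivative. -/
theorem fderiv_defect_inr {f : ℝ → ℝ} (hf : ContDiff ℝ ω f) (p q : ℕ) (x v δ : ℝ) :
    fderiv ℝ (defect f p q) ((x, 0), (v, δ)) ∘L .inr ℝ (ℝ × ℝ) (ℝ × ℝ) =
      (-((q : ℝ) • ContinuousLinearMap.snd ℝ ℝ ℝ)).prod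
        ((q : ℝ) • ContinuousLinearMap.fst ℝ ℝ ℝ
          - ((q : ℝ) * (q + 1) / 2) • ContinuousLinearMap.snd ℝ ℝ ℝ) := by
  have hd : DifferentiableAt ℝ (defect f p q) ((x, 0), (v, δ)) :=
    (contDiff_defect hf p q).differentiable (by simp) _
  have h1 : HasFDerivAt (fun u : ℝ × ℝ => defect f p q ((x, 0), u))
      (fderiv ℝ (defect f p q) ((x, 0), (v, δ)) ∘L .inr ℝ (ℝ × ℝ) (ℝ × ℝ)) (v, δ) :=
    hd.hasFDerivAt.comp (v, δ) (hasFDerivAt_prodMk_right (x, (0 : ℝ)) (v, δ))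
  have h2 : HasFDerivAt (fun u : ℝ × ℝ => defect f p q ((x, 0), u))
      ((-((q : ℝ) • ContinuousLinearMap.snd ℝ ℝ ℝ)).prod
        ((q : ℝ) • ContinuousLinearMap.fst ℝ ℝ ℝ
          - ((q : ℝ) * (q + 1) / 2) • ContinuousLinearMap.snd ℝ ℝ ℝ)) (v, δ) := by
    have e : (fun u : ℝ × ℝ => defect f p q ((x, 0), u)) = fun u : ℝ × ℝ =>
        ((-((q : ℝ) • ContinuousLinearMap.snd ℝ ℝ ℝ)).prod
        ((q : ℝ) • ContinuousLinearMap.fst ℝ ℝ ℝ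
          - ((q : ℝ) * (q + 1) / 2) • ContinuousLinearMap.snd ℝ ℝ ℝ)) u + (0, -(2 * π * p)) := by
      funext u
      ext
      · simp [defect]
      · simp [defect]
        ring
    rw [e]
    exact (ContinuousLinearMap.hasFDerivAt _).add_const _
  exact h1.unique h2

theorem isInvertible_fderiv_defect_inr {f : ℝ → ℝ} (hf : ContDiff ℝ ω f) (p q : ℕ) (hq : 0 < q)
    (x v δ : ℝ) :
    (fderiv ℝ (defect f p q) ((x, 0), (v, δ)) ∘L .inr ℝ (ℝ × ℝ) (ℝ × ℝ)).IsInvertible := by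
  have hq' : (q : ℝ) ≠ 0 := by positivity
  rw [fderiv_defect_inr hf]
  refine ContinuousLinearMap.IsInvertible.of_inverse
    (g := ((q : ℝ)⁻¹ • ContinuousLinearMap.snd ℝ ℝ ℝ
      - (((q : ℝ) + 1) / (2 * q)) • ContinuousLinearMap.fst ℝ ℝ ℝ).prod
        (-((q : ℝ)⁻¹ • ContinuousLinearMap.fst ℝ ℝ ℝ))) ?_ ?_ <;>
  · refine ContinuousLinearMap.ext fun u => Prod.ext ?_ ?_ <;> simp <;> field_simp <;> ring

/-- `y` is an analytic family, for `|ε| < r`, of zeros `(v, δ)` of the defect above the fixed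
initial position `x`, and it contains every zero that is `r`-close to `(2πp/q, 0)`. -/
structure IsSolution (f : ℝ → ℝ) (p q : ℕ) (r x : ℝ) (y : ℝ → ℝ × ℝ) : Prop where
  analytic : ∀ ε, |ε| < r → AnalyticAt ℝ y ε
  zero : ∀ ε, |ε| < r → defect f p q ((x, ε), y ε) = 0
  unique : ∀ ε v δ, |ε| < r → |v - 2 * π * p / q| < r → |δ| < r →
    defect f p q ((x, ε), (v, δ)) = 0 → y ε = (v, δ)

theorem IsSolution.mono {f : ℝ → ℝ} {p q : ℕ} {r s x : ℝ} {y : ℝ → ℝ × ℝ}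
    (h : IsSolution f p q r x y) (hs : s ≤ r) : IsSolution f p q s x y :=
  ⟨fun ε hε => h.analytic ε (hε.trans_le hs), fun ε hε => h.zero ε (hε.trans_le hs),
    fun ε v δ h1 h2 h3 => h.unique ε v δ (h1.trans_le hs) (h2.trans_le hs) (h3.trans_le hs)⟩

theorem defect_base (f : ℝ → ℝ) (p q : ℕ) (hq : 0 < q) (x : ℝ) :
    defect f p q ((x, 0), (2 * π * p / q, 0)) = 0 := by
  have hq' : (q : ℝ) ≠ 0 := by positivity
  ext <;> simp [defect]
  field_simp
  ring

/-- The implicit function theorem at `x₀` provides a radius that serves all nearby `x`. -/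
theorem eventually_isSolutionGerm {f : ℝ → ℝ} (hf : ContDiff ℝ ω f) (p q : ℕ) (hq : 0 < q)
    (x₀ : ℝ) : ∃ r > 0, ∀ᶠ x in 𝓝 x₀, ∃ y, IsSolution f p q r x y := by
  have cdf : ContDiffAt ℝ ω (defect f p q) ((x₀, 0), (2 * π * p / q, 0)) :=
    (contDiff_defect hf p q).contDiffAt
  have hinv := isInvertible_fderiv_defect_inr hf p q hq x₀ (2 * π * p / q) 0
  have hn : (ω : WithTop ℕ∞) ≠ 0 := by simp
  set ψ := cdf.implicitFunction hn hinv with hψ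
  have hA : ∀ᶠ z in 𝓝 (x₀, (0 : ℝ)), AnalyticAt ℝ ψ z :=
    (cdf.contDiffAt_implicitFunction hn hinv).analyticAt.eventually_analyticAt
  have hB : ∀ᶠ z in 𝓝 (x₀, (0 : ℝ)), defect f p q (z, ψ z) = 0 := by
    simpa only [defect_base f p q hq] using cdf.eventually_apply_implicitFunction hn hinv
  have hC := cdf.eventually_apply_eq_iff_implicitFunction hn hinv
  simp only [defect_base f p q hq, ← hψ] at hC
  obtain ⟨r₁, hr₁, h₁⟩ := Metric.eventually_nhds_iff.1 (hA.and hB)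
  obtain ⟨r₂, hr₂, h₂⟩ := Metric.eventually_nhds_iff.1 hC
  refine ⟨min r₁ r₂, lt_min hr₁ hr₂, ?_⟩
  filter_upwards [Metric.ball_mem_nhds x₀ (lt_min hr₁ hr₂)] with x hx
  rw [Metric.mem_ball, lt_min_iff] at hx
  have hz : ∀ ε : ℝ, |ε| < min r₁ r₂ → dist (x, ε) (x₀, 0) < r₁ := fun ε hε => by
    rw [Prod.dist_eq, max_lt_iff]
    exact ⟨hx.1, by simpa [Real.dist_eq] using (lt_min_iff.1 hε).1⟩
  refine ⟨fun ε => ψ (x, ε), fun ε hε => ?_, fun ε hε => (h₁ (hz ε hε)).2, ?_⟩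
  · have h := (h₁ (hz ε hε)).1
    have hg : AnalyticAt ℝ (fun ε : ℝ => (x, ε)) ε := by fun_prop
    exact h.comp hg
  · intro ε v δ hε hv hδ h0
    rw [lt_min_iff] at hε hv hδ
    refine (h₂ (y := ((x, ε), (v, δ))) ?_).1 h0
    simp only [Prod.dist_eq, max_lt_iff, Real.dist_eq, sub_zero]
    exact ⟨⟨hx.2, hε.2⟩, hv.2, hδ.2⟩

theorem pos_add_period {f : ℝ → ℝ} (hper : Function.Periodic f (2 * π)) (x ε v δ : ℝ) (n : ℕ) :
    pos f n ((x + 2 * π, ε), (v, δ)) = pos f n ((x, ε), (v, δ)) + 2 * π := by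
  induction n using Nat.strong_induction_on with
  | _ n ih =>
    have hW : sumW f n ((x + 2 * π, ε), (v, δ)) = sumW f n ((x, ε), (v, δ)) :=
      Finset.sum_congr rfl fun k hk => by rw [ih k (Finset.mem_range.1 hk), hper]
    rw [pos_eq, pos_eq, hW]
    ring

theorem defect_periodic {f : ℝ → ℝ} (hper : Function.Periodic f (2 * π)) (p q : ℕ) :
    Function.Periodic (fun (x ε : ℝ) (u : ℝ × ℝ) => defect f p q ((x, ε), u)) (2 * π) := by
  intro x
  funext ε u
  obtain ⟨v, δ⟩ := u
  simp only [defect, sumF, sumW, pos_add_period hper, hper _]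

theorem exists_uniform_radius {f : ℝ → ℝ} (hf : ContDiff ℝ ω f)
    (hper : Function.Periodic f (2 * π)) (p q : ℕ) (hq : 0 < q) :
    ∃ r > 0, ∀ x, ∃ y, IsSolution f p q r x y := by
  have hK : ∃ r > 0, ∀ x ∈ Set.Icc 0 (2 * π), ∃ y, IsSolution f p q r x y := by
    refine isCompact_Icc.induction_on (p := fun S => ∃ r > 0, ∀ x ∈ S, ∃ y, IsSolution f p q r x y)
      ⟨1, one_pos, by simp⟩ ?_ ?_ ?_
    · rintro S T hST ⟨r, hr, h⟩
      exact ⟨r, hr, fun x hx => h x (hST hx)⟩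
    · rintro S T ⟨r, hr, h⟩ ⟨s, hs, h'⟩
      refine ⟨min r s, lt_min hr hs, ?_⟩
      rintro x (hx | hx)
      · exact (h x hx).imp fun y hy => hy.mono (min_le_left _ _)
      · exact (h' x hx).imp fun y hy => hy.mono (min_le_right _ _)
    · intro x _
      obtain ⟨r, hr, h⟩ := eventually_isSolutionGerm hf p q hq x
      exact ⟨_, mem_nhdsWithin_of_mem_nhds h, r, hr, fun _ hy => hy⟩
  obtain ⟨r, hr, h⟩ := hK
  refine ⟨r, hr, fun x => ?_⟩
  obtain ⟨x', hx', e⟩ := (defect_periodic hper p q).exists_mem_Ico₀ two_pi_pos x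
  obtain ⟨y, hy⟩ := h x' ⟨hx'.1, hx'.2.le⟩
  have e' : ∀ ε u, defect f p q ((x, ε), u) = defect f p q ((x', ε), u) :=
    fun ε u => congrFun (congrFun e ε) u
  exact ⟨y, hy.analytic, fun ε hε => by rw [e']; exact hy.zero ε hε,
    fun ε v δ h1 h2 h3 h4 => hy.unique ε v δ h1 h2 h3 (by rw [← e']; exact h4)⟩

theorem exists_bound {f : ℝ → ℝ} (hf : Continuous f) (hper : Function.Periodic f (2 * π)) :
    ∃ M, 0 ≤ M ∧ ∀ x, |f x| ≤ M := by
  obtain ⟨M, hM⟩ := isCompact_Icc.exists_bound_of_continuousOn (s := Set.Icc 0 (2 * π))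
    hf.continuousOn
  have h : ∀ x, |f x| ≤ M := fun x => by
    obtain ⟨x', hx', e⟩ := hper.exists_mem_Ico₀ two_pi_pos x
    rw [e]
    exact hM x' ⟨hx'.1, hx'.2.le⟩
  exact ⟨M, (abs_nonneg _).trans (h 0), h⟩

theorem abs_sumW_le {f : ℝ → ℝ} {M : ℝ} (hM : ∀ x, |f x| ≤ M) (n : ℕ)
    (w : (ℝ × ℝ) × (ℝ × ℝ)) : |sumW f n w| ≤ n * (n * M) := by
  refine (Finset.abs_sum_le_sum_abs _ _).trans ?_
  refine (Finset.sum_le_card_nsmul _ _ ((n : ℝ) * M) fun k hk => ?_).trans_eq (by simp)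
  have hk' : (k : ℝ) ≤ n := by exact_mod_cast (Finset.mem_range.1 hk).le
  rw [abs_mul, abs_of_nonneg (sub_nonneg.2 hk')]
  have : (0 : ℝ) ≤ k := k.cast_nonneg
  exact mul_le_mul (by linarith) (hM _) (abs_nonneg _) (by positivity)

/-- Every zero of the defect has velocity `O(|ε| + |δ|)`-close to `2πp/q`. -/
theorem abs_sub_le_of_defect {f : ℝ → ℝ} {M : ℝ} (hM : ∀ x, |f x| ≤ M) {p q : ℕ} (hq : 0 < q)
    {x ε v δ : ℝ} (h : defect f p q ((x, ε), (v, δ)) = 0) :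
    |v - 2 * π * p / q| ≤ |δ| * ((q + 1) / 2) + |ε| * (q * M) := by
  have hq' : (0 : ℝ) < q := by positivity
  have h2 := congrArg Prod.snd h
  simp only [defect, Prod.snd_zero] at h2
  have e : v - 2 * π * p / q =
      δ * ((q + 1) / 2) + ε * (sumW f q ((x, ε), (v, δ)) / q) := by
    field_simp
    linarith
  rw [e]
  refine (abs_add_le _ _).trans ?_
  rw [abs_mul, abs_mul, abs_of_pos (show (0 : ℝ) < (q + 1) / 2 by positivity), abs_div,
    abs_of_pos hq']
  gcongr
  rw [div_le_iff₀ hq']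
  linarith [abs_sumW_le hM q ((x, ε), (v, δ))]

/-- Eliminating `δ` between the two equations `defect = 0` exhibits a factor `ε` in `v - 2πp/q`. -/
theorem eq_of_defect {f : ℝ → ℝ} {p q : ℕ} (hq : 0 < q) {x ε : ℝ} {u : ℝ × ℝ}
    (h : defect f p q ((x, ε), u) = 0) :
    u.1 - 2 * π * p / q = ε * (-((q + 1) / 2) * (1 / q * sumF f q ((x, ε), u))
      + 1 / q * sumW f q ((x, ε), u)) := by
  have hq' : (q : ℝ) ≠ 0 := by positivity
  have h1 := congrArg Prod.fst h
  have h2 := congrArg Prod.snd h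
  simp only [defect, Prod.fst_zero, Prod.snd_zero] at h1 h2
  field_simp
  linear_combination 2 * h2 - (q + 1) * h1

theorem IsSolution.apply_zero {f : ℝ → ℝ} {p q : ℕ} (hq : 0 < q) {r x : ℝ} {y : ℝ → ℝ × ℝ}
    (hr : 0 < r) (hy : IsSolution f p q r x y) : y 0 = (2 * π * p / q, 0) :=
  hy.unique 0 _ _ (by simpa) (by simpa) (by simpa) (defect_base f p q hq x)

theorem IsSolution.hasDerivAt {f : ℝ → ℝ} (hf : ContDiff ℝ ω f) {p q : ℕ} (hq : 0 < q)
    {r x : ℝ} {y : ℝ → ℝ × ℝ} (hr : 0 < r) (hy : IsSolution f p q r x y) :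
    HasDerivAt (fun ε => (y ε).1 - 2 * π * p / q)
      (-(((q : ℝ) + 1) / 2) *
            ((1 / (q : ℝ)) * ∑ k ∈ Finset.range q, f (x + (k : ℝ) * (2 * π * p / q)))
          + (1 / (q : ℝ)) * ∑ k ∈ Finset.range q,
              ((q : ℝ) - (k : ℝ)) * f (x + (k : ℝ) * (2 * π * p / q))) 0 := by
  set g : ℝ → ℝ := fun ε => -((q + 1) / 2) * (1 / q * sumF f q ((x, ε), y ε))
      + 1 / q * sumW f q ((x, ε), y ε) with hg
  have hyd : DifferentiableAt ℝ y 0 := (hy.analytic 0 (by simpa)).differentiableAt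
  have hgd : DifferentiableAt ℝ g 0 := by
    have hF : Differentiable ℝ (sumF f q) := (contDiff_sumF hf q).differentiable (by simp)
    have hW : Differentiable ℝ (sumW f q) := (contDiff_sumW hf q).differentiable (by simp)
    have hw : DifferentiableAt ℝ (fun ε : ℝ => ((x, ε), y ε)) 0 := by fun_prop
    have h1 : DifferentiableAt ℝ (fun ε : ℝ => sumF f q ((x, ε), y ε)) 0 :=
      hF.differentiableAt.comp 0 hw
    have h2 : DifferentiableAt ℝ (fun ε : ℝ => sumW f q ((x, ε), y ε)) 0 :=
      hW.differentiableAt.comp 0 hw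
    fun_prop
  have hmul : HasDerivAt (fun ε => ε * g ε) (g 0) 0 := by
    simpa using (hasDerivAt_id (0 : ℝ)).fun_mul hgd.hasDerivAt
  have hpos : ∀ k, pos f k ((x, 0), (2 * π * p / q, 0)) = x + k * (2 * π * p / q) :=
    fun k => by simp [pos_eq]
  have hg0 : g 0 = -(((q : ℝ) + 1) / 2) *
            ((1 / (q : ℝ)) * ∑ k ∈ Finset.range q, f (x + (k : ℝ) * (2 * π * p / q)))
          + (1 / (q : ℝ)) * ∑ k ∈ Finset.range q,
              ((q : ℝ) - (k : ℝ)) * f (x + (k : ℝ) * (2 * π * p / q)) := by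
    simp only [hg, hy.apply_zero hq hr, sumF, sumW, hpos]
  rw [← hg0]
  refine hmul.congr_of_eventuallyEq ?_
  filter_upwards [Metric.ball_mem_nhds (0 : ℝ) hr] with ε hε
  exact eq_of_defect hq (hy.zero ε (by simpa [Real.dist_eq] using hε))

/-- Let `p > 0, q > 0` be integers, `μ = 2πp/q`, and let `f` be `2π`-periodic and real-analytic.
Then there exist `ε̄ > 0` and a function `Y : ℝ × (−ε̄, ε̄) → ℝ`, real-analytic in its second
argument with `Y(x,0) = 0`, such that (i) for `|ε| < ε̄`, `|δ| < ε̄`, every `p/q` periodic point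
`(x₀, v₀)` of `F_{ε,δ}` satisfies `v₀ = μ + Y(x₀, ε)`, and (ii)
`∂Y/∂ε(x,0) = −((q+1)/2)·f̄(x) + f̿(x)` where `f̄(x) = (1/q)∑_{k<q} f(x+kμ)` and
`f̿(x) = (1/q)∑_{k<q} (q−k) f(x+kμ)`. -/
theorem periodic_points_lie_on_curve
    (p q : ℕ) (hp : 0 < p) (hq : 0 < q)
    (f : ℝ → ℝ) (hper : ∀ x : ℝ, f (x + 2 * π) = f x)
    (hfa : AnalyticOnNhd ℝ f Set.univ) :
    ∃ εbar : ℝ, 0 < εbar ∧ ∃ Y : ℝ → ℝ → ℝ,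
      (∀ x : ℝ, AnalyticOnNhd ℝ (Y x) (Set.Ioo (-εbar) εbar)) ∧
      (∀ x : ℝ, Y x 0 = 0) ∧
      (∀ ε δ : ℝ, |ε| < εbar → |δ| < εbar →
        ∀ x₀ v₀ : ℝ,
          (fun z : ℝ × ℝ => (z.1 + z.2 - δ - ε * f z.1, z.2 - δ - ε * f z.1))^[q] (x₀, v₀)
              = (x₀ + 2 * π * p, v₀) →
          v₀ = 2 * π * p / q + Y x₀ ε) ∧
      (∀ x : ℝ, deriv (Y x) 0 =
        -(((q : ℝ) + 1) / 2) *
            ((1 / (q : ℝ)) * ∑ k ∈ Finset.range q, f (x + (k : ℝ) * (2 * π * p / q)))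
          + (1 / (q : ℝ)) * ∑ k ∈ Finset.range q,
              ((q : ℝ) - (k : ℝ)) * f (x + (k : ℝ) * (2 * π * p / q))) := by
  have hf : ContDiff ℝ ω f := hfa.contDiff
  obtain ⟨r, hr, h⟩ := exists_uniform_radius hf hper p q hq
  choose y hy using h
  obtain ⟨M, hM0, hM⟩ := exists_bound hf.continuous hper
  -- `εbar ≤ r` and `εbar * C < r`, so the a priori bound on `v₀ - μ` stays below `r`.
  set C : ℝ := (q + 1) / 2 + q * M with hC
  have hC0 : 0 < C := by positivity
  refine ⟨min r (r / C), lt_min hr (by positivity), fun x ε => (y x ε).1 - 2 * π * p / q,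
    ?_, ?_, ?_, ?_⟩
  · intro x ε hε
    have hyε := (hy x).analytic ε ((abs_lt.2 hε).trans_le (min_le_left _ _))
    exact (analyticAt_fst.comp hyε).sub analyticAt_const
  · intro x
    simp [(hy x).apply_zero hq hr]
  · intro ε δ hε hδ x₀ v₀ hper₀
    have h0 : defect f p q ((x₀, ε), (v₀, δ)) = 0 :=
      (iterate_eq_iff_defect f p q x₀ ε v₀ δ).1 hper₀
    rw [lt_min_iff] at hε hδ
    have hv : |v₀ - 2 * π * p / q| < r := by
      calc |v₀ - 2 * π * p / q| ≤ |δ| * ((q + 1) / 2) + |ε| * (q * M) :=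
            abs_sub_le_of_defect hM hq h0
        _ < r / C * ((q + 1) / 2) + r / C * (q * M) :=
            add_lt_add_of_lt_of_le (by gcongr; exact hδ.2) (by gcongr; exact hε.2.le)
        _ = r := by rw [← mul_add, ← hC]; field_simp
    simp [(hy x₀).unique ε v₀ δ hε.1 hv hδ.1 h0]
  · intro x
    exact ((hy x).hasDerivAt hf hq hr).deriv
end

section
/- Let p > 0, q > 0 be integers, μ = 2πp/q, and let f : ℝ → ℝ be 2π-periodic and real-analytic. Then there exist ε̄ > 0 and functions Δ, Y : ℝ × (−ε̄, ε̄) → ℝ with Δ(x, 0) = Y(x, 0) = 0 for all x, continuous in x and real-analytic in ε, and 2π-periodic in x, such that: (a) for all x ∈ ℝ and |ε| < ε̄, one has R_q(x, Y(x, ε), ε, Δ(x, ε)) = 0 and S_q(x, Y(x, ε), ε, Δ(x, ε)) = 0, i.e., the point (x, μ + Y(x, ε)) is a p/q periodic point of F_{ε, Δ(x,ε)}; and (b) (uniqueness) whenever |ε| < ε̄, |y₀| < ε̄, |δ| < ε̄ and R_q(x, y₀, ε, δ) = S_q(x, y₀, ε, δ) = 0, then y₀ = Y(x, ε) and δ =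 Δ(x, ε). -/
/-!
The orbit `(x_n, y_n)` of the shifted cylinder map satisfies
`y_n = y₀ - n δ - ε ∑_{j<n} f x_j` and
`x_n = x₀ + n y₀ + n μ - (n (n + 1) / 2) δ - ε ∑_{j<n} (n - j) f x_j`.
Hence `R_q = S_q = 0` is equivalent to the fixed-point equation `(y₀, δ) = ε • B (y₀, δ)`, where
`B = returnField` is built from the two sums for `n = q` (`iterate_eq_iff`).

Since `f` is analytic and periodic, it is globally Lipschitz, and therefore `B` is Lipschitz in
`(x₀, y₀, δ)` on the whole space, uniformly for `|ε| ≤ 1` (`returnField_lipschitz`). For small `ε`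
the map `ε • B` is thus a `1/2`-contraction of `ℝ²`. Banach's theorem gives exactly one solution
in all of `ℝ²`, so the uniqueness in the theorem holds without smallness of `y₀` and `δ`, and the
solution inherits `2π`-periodicity and Lipschitz continuity in `x₀`.
Analyticity in `ε` comes from the analytic implicit function theorem: a contraction
has derivative of norm `< 1`, so `1 - ε DB` is invertible (`analyticAt_fixedPoint`).
-/

open Real
open scoped NNReal ContDiff Topology

/-- The map `G_{ε,δ}` on the plane, in the shifted coordinates `(x, y)`, `y = v - μ`. -/
noncomputable def shiftedMap (f : ℝ → ℝ) (μ ε δ : ℝ) (z : ℝ × ℝ) : ℝ × ℝ :=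
  (z.1 + z.2 + μ + (-δ - ε * f z.1), z.2 + (-δ - ε * f z.1))

/-- The `n`-th orbit point `(x_n, y_n)`, as a function of `ε` and of `w = (x₀, (y₀, δ))`. -/
noncomputable def orbit (f : ℝ → ℝ) (μ : ℝ) (n : ℕ) (ε : ℝ) (w : ℝ × (ℝ × ℝ)) : ℝ × ℝ :=
  (shiftedMap f μ ε w.2.2)^[n] (w.1, w.2.1)

/-- The map `B` for which `R_q = S_q = 0` reads `(y₀, δ) = ε • B ε (x₀, (y₀, δ))`. -/
noncomputable def returnField (f : ℝ → ℝ) (μ : ℝ) (q : ℕ) (ε : ℝ) (w : ℝ × (ℝ × ℝ)) : ℝ × ℝ :=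
  ((1 / q : ℝ) * ∑ j ∈ Finset.range q, ((q : ℝ) - j) * f (orbit f μ j ε w).1
      + (-((q + 1) / (2 * q)) : ℝ) * ∑ j ∈ Finset.range q, 1 * f (orbit f μ j ε w).1,
    (-1 / q : ℝ) * ∑ j ∈ Finset.range q, 1 * f (orbit f μ j ε w).1)

section orbit

variable (f : ℝ → ℝ) (μ : ℝ)

lemma orbit_succ (n : ℕ) (ε : ℝ) (w : ℝ × (ℝ × ℝ)) :
    orbit f μ (n + 1) ε w = shiftedMap f μ ε w.2.2 (orbit f μ n ε w) := by
  simp [orbit, Function.iterate_succ_apply']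

lemma orbit_eq (n : ℕ) (ε : ℝ) (w : ℝ × (ℝ × ℝ)) :
    (orbit f μ n ε w).1 = w.1 + n * w.2.1 + n * μ - n * (n + 1) / 2 * w.2.2
        - ε * ∑ j ∈ Finset.range n, ((n : ℝ) - j) * f (orbit f μ j ε w).1 ∧
    (orbit f μ n ε w).2 = w.2.1 - n * w.2.2
        - ε * ∑ j ∈ Finset.range n, 1 * f (orbit f μ j ε w).1 := by
  induction n with
  | zero => simp [orbit]
  | succ n ih =>
    obtain ⟨h1, h2⟩ := ih
    have key : ∑ j ∈ Finset.range n, (((n + 1 : ℕ) : ℝ) - j) * f (orbit f μ j ε w).1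
        = ∑ j ∈ Finset.range n, ((n : ℝ) - j) * f (orbit f μ j ε w).1
          + ∑ j ∈ Finset.range n, 1 * f (orbit f μ j ε w).1 := by
      rw [← Finset.sum_add_distrib]
      refine Finset.sum_congr rfl fun j _ => ?_
      push_cast
      ring
    rw [orbit_succ, Finset.sum_range_succ, Finset.sum_range_succ, key]
    generalize hX : f (orbit f μ n ε w).1 = X
    simp only [shiftedMap, hX]
    rw [h1, h2]
    push_cast
    constructor <;> ring

lemma iterate_eq_iff {q : ℕ} (hq : 0 < q) (ε x : ℝ) (u : ℝ × ℝ) :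
    (shiftedMap f μ ε u.2)^[q] (x, u.1) = (x + q * μ, u.1) ↔
      ε • returnField f μ q ε (x, u) = u := by
  have hq' : (q : ℝ) ≠ 0 := by positivity
  change orbit f μ q ε (x, u) = _ ↔ _
  obtain ⟨h1, h2⟩ := orbit_eq f μ q ε (x, u)
  rw [Prod.ext_iff, Prod.ext_iff, h1, h2]
  simp only [returnField, Prod.smul_fst, Prod.smul_snd, smul_eq_mul]
  generalize ∑ j ∈ Finset.range q, ((q : ℝ) - j) * f (orbit f μ j ε (x, u)).1 = C
  generalize ∑ j ∈ Finset.range q, 1 * f (orbit f μ j ε (x, u)).1 = A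
  obtain ⟨y, δ⟩ := u
  constructor
  · rintro ⟨e1, e2⟩
    have hδ : δ = -(ε * A) / q := by
      field_simp
      linarith
    have hy : y = (q * (q + 1) / 2 * δ + ε * C) / q := by
      field_simp
      linarith
    refine ⟨?_, ?_⟩
    · simp only
      rw [hy, hδ]
      field_simp
      ring
    · simp only
      rw [hδ]
      ring
  · rintro ⟨e1, e2⟩
    simp only at e1 e2
    rw [← e1, ← e2]
    constructor <;> field_simp <;> ring

variable {f}

lemma orbit_add_period (hper : ∀ x, f (x + 2 * π) = f x) (n : ℕ) (ε x : ℝ) (u : ℝ × ℝ) :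
    orbit f μ n ε (x + 2 * π, u)
      = ((orbit f μ n ε (x, u)).1 + 2 * π, (orbit f μ n ε (x, u)).2) := by
  induction n with
  | zero => simp [orbit]
  | succ n ih =>
    rw [orbit_succ, orbit_succ, ih]
    simp only [shiftedMap, hper]
    ext <;> simp only
    ring

lemma returnField_add_period (hper : ∀ x, f (x + 2 * π) = f x) (q : ℕ) (ε x : ℝ) (u : ℝ × ℝ) :
    returnField f μ q ε (x + 2 * π, u) = returnField f μ q ε (x, u) := by
  simp [returnField, orbit_add_period μ hper, hper]

lemma orbit_contDiff (hf : ContDiff ℝ ω f) (n : ℕ) (x : ℝ) :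
    ContDiff ℝ ω (fun p : ℝ × (ℝ × ℝ) => orbit f μ n p.1 (x, p.2)) := by
  induction n with
  | zero =>
    simp only [orbit, Function.iterate_zero, id]
    fun_prop
  | succ n ih =>
    simp only [orbit_succ, shiftedMap]
    fun_prop

lemma returnField_contDiff (hf : ContDiff ℝ ω f) (q : ℕ) (x : ℝ) :
    ContDiff ℝ ω (fun p : ℝ × (ℝ × ℝ) => returnField f μ q p.1 (x, p.2)) := by
  have h := fun n => orbit_contDiff μ hf n x
  unfold returnField
  fun_prop

/-- A family `φ ε` of maps is Lipschitz uniformly in `|ε| ≤ 1`. -/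
def UnifLip {F : Type*} [PseudoEMetricSpace F] (φ : ℝ → ℝ × (ℝ × ℝ) → F) : Prop :=
  ∃ K : ℝ≥0, ∀ ε, |ε| ≤ 1 → LipschitzWith K (φ ε)

lemma UnifLip.add {φ ψ : ℝ → ℝ × (ℝ × ℝ) → ℝ} (hφ : UnifLip φ) (hψ : UnifLip ψ) :
    UnifLip (fun ε w => φ ε w + ψ ε w) := by
  obtain ⟨K, hK⟩ := hφ
  obtain ⟨L, hL⟩ := hψ
  exact ⟨K + L, fun ε hε => (hK ε hε).add (hL ε hε)⟩

lemma UnifLip.comp {φ : ℝ → ℝ × (ℝ × ℝ) → ℝ} (hφ : UnifLip φ) {g : ℝ → ℝ} {M : ℝ≥0}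
    (hg : LipschitzWith M g) : UnifLip (fun ε w => g (φ ε w)) := by
  obtain ⟨K, hK⟩ := hφ
  exact ⟨M * K, fun ε hε => hg.comp (hK ε hε)⟩

lemma UnifLip.const_mul {φ : ℝ → ℝ × (ℝ × ℝ) → ℝ} (hφ : UnifLip φ) (c : ℝ) :
    UnifLip (fun ε w => c * φ ε w) :=
  hφ.comp (lipschitzWith_smul c)

lemma UnifLip.eps_mul {φ : ℝ → ℝ × (ℝ × ℝ) → ℝ} (hφ : UnifLip φ) :
    UnifLip (fun ε w => ε * φ ε w) := by
  obtain ⟨K, hK⟩ := hφ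
  refine ⟨1 * K, fun ε hε => LipschitzWith.comp ?_ (hK ε hε)⟩
  exact (lipschitzWith_smul ε).weaken (by simpa [← NNReal.coe_le_coe] using hε)

lemma UnifLip.sum {φ : ℕ → ℝ → ℝ × (ℝ × ℝ) → ℝ} (hφ : ∀ j, UnifLip (φ j)) (n : ℕ) :
    UnifLip (fun ε w => ∑ j ∈ Finset.range n, φ j ε w) := by
  induction n with
  | zero => exact ⟨0, fun ε _ => by simp⟩
  | succ n ih =>
    simp only [Finset.sum_range_succ]
    exact ih.add (hφ n)

lemma orbit_unifLip {M : ℝ≥0} (hf : LipschitzWith M f) (n : ℕ) :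
    UnifLip (fun ε w => (orbit f μ n ε w).1) ∧ UnifLip (fun ε w => (orbit f μ n ε w).2) := by
  induction n with
  | zero =>
    refine ⟨⟨1, fun ε _ => LipschitzWith.prod_fst⟩, ⟨1 * 1, fun ε _ => ?_⟩⟩
    exact LipschitzWith.prod_fst.comp LipschitzWith.prod_snd
  | succ n ih =>
    have hδ : UnifLip (fun _ w => w.2.2) :=
      ⟨1 * 1, fun _ _ => LipschitzWith.prod_snd.comp LipschitzWith.prod_snd⟩
    have hμ : UnifLip (fun _ _ => μ) := ⟨0, fun _ _ => LipschitzWith.const μ⟩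
    have hg : UnifLip (fun ε w => -1 * w.2.2 + -1 * (ε * f (orbit f μ n ε w).1)) :=
      (hδ.const_mul _).add (((ih.1.comp hf).eps_mul).const_mul _)
    simp only [neg_one_mul, ← sub_eq_add_neg] at hg
    simp only [orbit_succ, shiftedMap]
    exact ⟨((ih.1.add ih.2).add hμ).add hg, ih.2.add hg⟩

lemma returnField_lipschitz {M : ℝ≥0} (hf : LipschitzWith M f) (q : ℕ) :
    UnifLip (returnField f μ q) := by
  have hs : ∀ c : ℕ → ℝ, UnifLip
      (fun ε w => ∑ j ∈ Finset.range q, c j * f (orbit f μ j ε w).1) := fun c =>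
    UnifLip.sum (fun j => ((orbit_unifLip μ hf j).1.comp hf).const_mul (c j)) q
  obtain ⟨K, hK⟩ := ((hs fun j => (q : ℝ) - j).const_mul (1 / q)).add
    ((hs fun _ => 1).const_mul (-((q + 1) / (2 * q))))
  obtain ⟨L, hL⟩ := (hs fun _ => 1).const_mul (-1 / q)
  exact ⟨max K L, fun ε hε => (hK ε hε).prodMk (hL ε hε)⟩

end orbit

lemma periodic_contDiff_lipschitz {f : ℝ → ℝ} (hper : ∀ x, f (x + 2 * π) = f x)
    (hf : ContDiff ℝ ω f) : ∃ M : ℝ≥0, LipschitzWith M f := by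
  have hper' : Function.Periodic (deriv f) (2 * π) := fun x => by
    rw [← deriv_comp_add_const]
    exact congrArg (fun g => deriv g x) (funext hper)
  obtain ⟨C, hC⟩ := (hper'.isBounded_of_continuous (by simp [pi_ne_zero])
    (hf.continuous_deriv (by simp))).exists_norm_le
  refine ⟨C.toNNReal, lipschitzWith_of_nnnorm_deriv_le (hf.differentiable (by simp)) fun x => ?_⟩
  rw [← NNReal.coe_le_coe]
  exact (hC _ ⟨x, rfl⟩).trans (Real.le_coe_toNNReal C)

/-- If `T` is analytic at `(t₀, u t₀)`, `T (t₀, ·)` is a contraction, and `u t` is the unique fixed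
point of `T (t, ·)` for all `t` near `t₀`, then `u` is analytic at `t₀`. -/
lemma analyticAt_fixedPoint {E : Type*} [NormedAddCommGroup E] [NormedSpace ℝ E] [CompleteSpace E]
    {T : ℝ × E → E} {u : ℝ → E} {t₀ : ℝ} (hT : ContDiffAt ℝ ω T (t₀, u t₀)) {K : ℝ≥0} (hK : K < 1)
    (hlip : LipschitzWith K (fun v => T (t₀, v)))
    (hu : ∀ᶠ t in 𝓝 t₀, ∀ v, T (t, v) = v ↔ v = u t) : AnalyticAt ℝ u t₀ := by
  have hΦ : ContDiffAt ℝ ω (fun p : ℝ × E => p.2 - T p) (t₀, u t₀) := contDiffAt_snd.sub hT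
  have hTd : DifferentiableAt ℝ T (t₀, u t₀) := hT.differentiableAt (by simp)
  set D : E →L[ℝ] E := fderiv ℝ T (t₀, u t₀) ∘L .inr ℝ ℝ E with hD
  have hDn : ‖D‖ < 1 := by
    have h : HasFDerivAt (fun v => T (t₀, v)) D (u t₀) :=
      hTd.hasFDerivAt.comp (u t₀) (hasFDerivAt_prodMk_right t₀ (u t₀))
    exact (h.le_of_lipschitz hlip).trans_lt (by exact_mod_cast hK)
  have hfd : fderiv ℝ (fun p : ℝ × E => p.2 - T p) (t₀, u t₀) ∘L .inr ℝ ℝ E = 1 - D := by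
    rw [fderiv_fun_sub differentiableAt_snd hTd, fderiv_snd, hD]
    ext v
    simp
  have hinv : (fderiv ℝ (fun p : ℝ × E => p.2 - T p) (t₀, u t₀) ∘L
      .inr ℝ ℝ E).IsInvertible := by
    rw [hfd]
    obtain ⟨e, he⟩ := isUnit_one_sub_of_norm_lt_one hDn
    exact ⟨ContinuousLinearEquiv.unitsEquiv ℝ E e, by rw [← he]; rfl⟩
  have h0 : T (t₀, u t₀) = u t₀ := (hu.self_of_nhds _).2 rfl
  have hψ := hΦ.eventually_apply_implicitFunction (by simp) hinv
  have hψa := hΦ.contDiffAt_implicitFunction (by simp) hinv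
  refine (ContDiffAt.congr_of_eventuallyEq hψa ?_).analyticAt
  filter_upwards [hu, hψ] with t h1 h2
  refine ((h1 _).1 ?_).symm
  simp only [h0, sub_self] at h2
  exact (sub_eq_zero.1 h2).symm

/-- Existence and uniqueness (via the implicit function theorem) of the functions
`Δ(x,ε)`, `Y(x,ε)` solving `R_q = S_q = 0`.  Here `μ = 2πp/q` and, in shifted coordinates,
`G_{ε,δ}(x,y) = (x + y + μ + g(x), y + g(x))` with `g(x) = −δ − ε f(x)`; the vanishing of the
remainders `R_q, S_q` at `(x, y₀, ε, δ)` is expressed as `G_{ε,δ}^q (x, y₀) = (x + qμ, y₀)`.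
(a) `R_q(x, Y(x,ε), ε, Δ(x,ε)) = S_q(x, Y(x,ε), ε, Δ(x,ε)) = 0`, and (b) the solution is
unique for `|ε|, |y₀|, |δ| < ε̄`. -/
theorem existence_uniqueness_Delta_Y
    (p q : ℕ) (hp : 0 < p) (hq : 0 < q)
    (f : ℝ → ℝ) (hper : ∀ x : ℝ, f (x + 2 * π) = f x)
    (hfa : AnalyticOnNhd ℝ f Set.univ) :
    ∃ εbar : ℝ, 0 < εbar ∧ ∃ Δ Y : ℝ → ℝ → ℝ,
      (∀ x : ℝ, Δ x 0 = 0 ∧ Y x 0 = 0) ∧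
      (∀ ε : ℝ, |ε| < εbar →
        Continuous (fun x : ℝ => Δ x ε) ∧ Continuous (fun x : ℝ => Y x ε)) ∧
      (∀ x : ℝ, AnalyticOnNhd ℝ (Δ x) (Set.Ioo (-εbar) εbar) ∧
                AnalyticOnNhd ℝ (Y x) (Set.Ioo (-εbar) εbar)) ∧
      (∀ x ε : ℝ, Δ (x + 2 * π) ε = Δ x ε ∧ Y (x + 2 * π) ε = Y x ε) ∧
      (∀ x ε : ℝ, |ε| < εbar →
        (fun z : ℝ × ℝ =>
            (z.1 + z.2 + 2 * π * p / q + (-(Δ x ε) - ε * f z.1),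
             z.2 + (-(Δ x ε) - ε * f z.1)))^[q] (x, Y x ε)
          = (x + (q : ℝ) * (2 * π * p / q), Y x ε)) ∧
      (∀ x ε y₀ δ : ℝ, |ε| < εbar → |y₀| < εbar → |δ| < εbar →
        (fun z : ℝ × ℝ =>
            (z.1 + z.2 + 2 * π * p / q + (-δ - ε * f z.1),
             z.2 + (-δ - ε * f z.1)))^[q] (x, y₀)
          = (x + (q : ℝ) * (2 * π * p / q), y₀) →
        y₀ = Y x ε ∧ δ = Δ x ε) := by
  have hf : ContDiff ℝ ω f := by
    rw [← contDiffOn_univ]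
    exact hfa.contDiffOn uniqueDiffOn_univ
  obtain ⟨M, hM⟩ := periodic_contDiff_lipschitz hper hf
  set μ : ℝ := 2 * π * p / q with hμ
  obtain ⟨L, hL⟩ := returnField_lipschitz μ hM q
  -- `r (L + 1) = 1 / 2`, so `ε • B` is a `1/2`-contraction for `|ε| < r`
  obtain ⟨r, hr0, hr1, hrL⟩ : ∃ r : ℝ, 0 < r ∧ r ≤ 1 ∧ r * L ≤ 1 / 2 := by
    have hL0 : (0 : ℝ) ≤ L := L.2
    refine ⟨1 / (2 * (L + 1)), by positivity, ?_, ?_⟩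
    · rw [div_le_one (by positivity)]
      linarith
    · rw [div_mul_eq_mul_div, div_le_div_iff₀ (by positivity) (by norm_num)]
      linarith
  have hlip : ∀ ε, |ε| < r → LipschitzWith (1 / 2) (fun w => ε • returnField f μ q ε w) := by
    intro ε hε
    refine ((lipschitzWith_smul ε).comp (hL ε (hε.le.trans hr1))).weaken ?_
    rw [← NNReal.coe_le_coe]
    push_cast
    rw [Real.norm_eq_abs]
    exact (mul_le_mul_of_nonneg_right hε.le L.2).trans hrL
  have hlip' : ∀ ε x, |ε| < r →
      LipschitzWith (1 / 2) (fun u => ε • returnField f μ q ε (x, u)) := by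
    intro ε x hε
    simpa [Function.comp_def] using (hlip ε hε).comp (LipschitzWith.prodMk_left x)
  have hhalf : (1 / 2 : ℝ≥0) < 1 := by
    rw [← NNReal.coe_lt_coe]
    norm_num
  have hex : ∀ x ε, ∃ u : ℝ × ℝ, (|ε| < r → ∀ v, ε • returnField f μ q ε (x, v) = v ↔ v = u) ∧
      (¬ |ε| < r → u = 0) := by
    intro x ε
    by_cases hε : |ε| < r
    · have hc : ContractingWith (1 / 2) (fun u => ε • returnField f μ q ε (x, u)) :=
        ⟨hhalf, hlip' ε x hε⟩
      refine ⟨hc.fixedPoint, fun _ v => ⟨fun h => hc.fixedPoint_unique h, ?_⟩, fun h => (h hε).elim⟩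
      rintro rfl
      exact hc.fixedPoint_isFixedPt
    · exact ⟨0, fun h => (hε h).elim, fun _ => rfl⟩
  choose U hU hU0 using hex
  have hfix : ∀ x ε, |ε| < r → ε • returnField f μ q ε (x, U x ε) = U x ε :=
    fun x ε hε => (hU x ε hε _).2 rfl
  have hzero : ∀ x, U x 0 = 0 := fun x => by
    have := hfix x 0 (by simpa using hr0)
    rw [zero_smul] at this
    exact this.symm
  have hcont : ∀ ε, |ε| < r → Continuous (fun x => U x ε) := by
    intro ε hε
    refine (LipschitzWith.of_dist_le_mul (K := 1) fun x x' => ?_).continuous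
    have h := (hlip ε hε).dist_le_mul (x, U x ε) (x', U x' ε)
    simp only [hfix x ε hε, hfix x' ε hε] at h
    rw [Prod.dist_eq (x := (x, U x ε))] at h
    push_cast at h ⊢
    have h1 : 0 ≤ dist x x' := dist_nonneg
    have h2 : 0 ≤ dist (U x ε) (U x' ε) := dist_nonneg
    rcases max_cases (dist x x') (dist (U x ε) (U x' ε)) with ⟨h3, _⟩ | ⟨h3, _⟩ <;>
      rw [h3] at h <;> linarith
  have han : ∀ x ε, |ε| < r → AnalyticAt ℝ (U x) ε := by
    intro x ε hε
    refine analyticAt_fixedPoint (T := fun p => p.1 • returnField f μ q p.1 (x, p.2))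
      ?_ hhalf (hlip' ε x hε) ?_
    · exact (contDiff_fst.smul (returnField_contDiff μ hf q x)).contDiffAt
    · filter_upwards [(isOpen_lt continuous_abs continuous_const).mem_nhds hε] with t ht
      exact hU x t ht
  have hUper : ∀ x ε, U (x + 2 * π) ε = U x ε := by
    intro x ε
    by_cases hε : |ε| < r
    · refine (hU x ε hε _).1 ?_
      rw [← returnField_add_period μ hper]
      exact hfix _ ε hε
    · rw [hU0 _ _ hε, hU0 _ _ hε]
  refine ⟨r, hr0, fun x ε => (U x ε).2, fun x ε => (U x ε).1, ?_, ?_, ?_, ?_, ?_, ?_⟩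
  · intro x
    simp [hzero]
  · exact fun ε hε => ⟨(hcont ε hε).snd, (hcont ε hε).fst⟩
  · refine fun x => ⟨fun ε hε => ?_, fun ε hε => ?_⟩
    · exact analyticAt_snd.comp (han x ε (abs_lt.2 hε))
    · exact analyticAt_fst.comp (han x ε (abs_lt.2 hε))
  · intro x ε
    simp [hUper]
  · exact fun x ε hε => (iterate_eq_iff f μ hq ε x (U x ε)).2 (hfix x ε hε)
  · intro x ε y₀ δ hε _ _ h
    have := (hU x ε hε (y₀, δ)).1 ((iterate_eq_iff f μ hq ε x (y₀, δ)).1 h)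
    exact ⟨congrArg Prod.fst this, congrArg Prod.snd this⟩
end

section
/- Let p > 0, q > 0 be integers, μ = 2πp/q, let f : ℝ → ℝ be 2π-periodic and continuously differentiable, and fix x₀ ∈ ℝ. Suppose ρ > 0 and δ, y : (−ρ, ρ) → ℝ are differentiable at 0 with δ(0) = y(0) = 0, and that for every ε ∈ (−ρ, ρ) the point (x₀, μ + y(ε)) is a p/q periodic point of F_{ε, δ(ε)}. Then δ′(0) = −f̄(x₀) and y′(0) = −((q+1)/2)·f̄(x₀) + f̿(x₀). -/
/-!
Follow the orbit `(X n ε, V n ε)` of `(x₀, μ + y ε)`. At `ε = 0` the map is the shear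
`(x, v) ↦ (x + v, v)`, so `X n 0 = x₀ + n μ` and `V n 0 = μ`. Since the term `ε f (X n ε)` has
derivative `f (x₀ + n μ)` at `0`, the derivatives of `X n` and `V n` at `0` obey a linear
recursion that is solved explicitly in `hasDerivAt_orbit`. For `n = q`, periodicity says that
`X q` is constant and `V q - y` is constant near `0`; comparing derivatives gives two linear
equations for `δ′(0)` and `y′(0)`.
-/

open Real

/-- Values and first-order expansion at `ε = 0` of the `n`-th point of the orbit of
`(x₀, μ + y ε)`, for arbitrary `μ`. -/
theorem hasDerivAt_orbit (f : ℝ → ℝ) (hf : Differentiable ℝ f) (x₀ μ : ℝ) (δ y : ℝ → ℝ)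
    (δ' y' : ℝ) (hδ : HasDerivAt δ δ' 0) (hy : HasDerivAt y y' 0)
    (hδ0 : δ 0 = 0) (hy0 : y 0 = 0) (P : ℕ → ℝ → ℝ × ℝ)
    (hP0 : ∀ ε, P 0 ε = (x₀, μ + y ε))
    (hP : ∀ n ε, P (n + 1) ε =
      ((P n ε).1 + (P n ε).2 - δ ε - ε * f (P n ε).1, (P n ε).2 - δ ε - ε * f (P n ε).1))
    (n : ℕ) :
    P n 0 = (x₀ + n * μ, μ) ∧
    HasDerivAt (fun ε => (P n ε).1)
      (n * y' - n * (n + 1) / 2 * δ' - ∑ k ∈ Finset.range n, ((n : ℝ) - k) * f (x₀ + k * μ)) 0 ∧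
    HasDerivAt (fun ε => (P n ε).2)
      (y' - n * δ' - ∑ k ∈ Finset.range n, f (x₀ + k * μ)) 0 := by
  induction n with
  | zero =>
    refine ⟨by simp [hP0, hy0], ?_, ?_⟩
    · simpa [hP0] using hasDerivAt_const (0 : ℝ) x₀
    · simpa [hP0] using hy.const_add μ
  | succ n ih =>
    obtain ⟨h0, hX, hV⟩ := ih
    have hfX : HasDerivAt (fun ε => ε * f (P n ε).1) (f (x₀ + n * μ)) 0 := by
      have hc := (hf (P n 0).1).hasDerivAt.comp (0 : ℝ) hX
      have := (hasDerivAt_id (0 : ℝ)).mul hc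
      refine (this.congr_deriv ?_)
      simp [h0]
    -- The coefficients increase by one, and the weight `n - k` vanishes for the new index `k = n`.
    have hsum : ∑ k ∈ Finset.range (n + 1), (((n + 1 : ℕ) : ℝ) - k) * f (x₀ + k * μ) =
        ∑ k ∈ Finset.range n, ((n : ℝ) - k) * f (x₀ + k * μ) +
          (∑ k ∈ Finset.range n, f (x₀ + k * μ) + f (x₀ + n * μ)) := by
      rw [Finset.sum_range_succ, ← add_assoc, ← Finset.sum_add_distrib]
      congr 1
      · refine Finset.sum_congr rfl fun k _ => ?_
        push_cast
        ring
      · push_cast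
        ring
    refine ⟨?_, ?_, ?_⟩
    · rw [hP, h0]
      ext <;> simp [hδ0]
      ring
    · simp only [hP]
      refine (((hX.add hV).sub hδ).sub hfX).congr_deriv ?_
      rw [hsum]
      push_cast
      ring
    · simp only [hP]
      refine ((hV.sub hδ).sub hfX).congr_deriv ?_
      rw [Finset.sum_range_succ]
      push_cast
      ring

/-- First-order coefficients.  Let `μ = 2πp/q`, `f` 2π-periodic and `C¹`, and fix `x₀`.  If
`δ(ε), y(ε)` are differentiable at `0` with `δ(0) = y(0) = 0` and for every `ε ∈ (−ρ, ρ)` the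
point `(x₀, μ + y(ε))` is a `p/q` periodic point of `F_{ε, δ(ε)}`, then
`δ′(0) = −f̄(x₀)` and `y′(0) = −((q+1)/2)·f̄(x₀) + f̿(x₀)`, where
`f̄(x) = (1/q)∑_{k<q} f(x+kμ)` and `f̿(x) = (1/q)∑_{k<q} (q−k) f(x+kμ)`. -/
theorem first_order_coefficients
    (p q : ℕ) (hp : 0 < p) (hq : 0 < q)
    (f : ℝ → ℝ) (hper : ∀ x : ℝ, f (x + 2 * π) = f x) (hf : ContDiff ℝ 1 f)
    (x₀ : ℝ) (ρ : ℝ) (hρ : 0 < ρ) (δ y : ℝ → ℝ)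
    (hδdiff : DifferentiableAt ℝ δ 0) (hydiff : DifferentiableAt ℝ y 0)
    (hδ0 : δ 0 = 0) (hy0 : y 0 = 0)
    (hperiodic : ∀ ε ∈ Set.Ioo (-ρ) ρ,
      (fun z : ℝ × ℝ =>
          (z.1 + z.2 - δ ε - ε * f z.1, z.2 - δ ε - ε * f z.1))^[q]
        (x₀, 2 * π * p / q + y ε) = (x₀ + 2 * π * p, 2 * π * p / q + y ε)) :
    deriv δ 0 =
        -((1 / (q : ℝ)) * ∑ k ∈ Finset.range q, f (x₀ + (k : ℝ) * (2 * π * p / q))) ∧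
    deriv y 0 =
        -(((q : ℝ) + 1) / 2) *
            ((1 / (q : ℝ)) * ∑ k ∈ Finset.range q, f (x₀ + (k : ℝ) * (2 * π * p / q)))
          + (1 / (q : ℝ)) * ∑ k ∈ Finset.range q,
              ((q : ℝ) - (k : ℝ)) * f (x₀ + (k : ℝ) * (2 * π * p / q)) := by
  obtain ⟨-, hX, hV⟩ := hasDerivAt_orbit f (hf.differentiable one_ne_zero) x₀ (2 * π * p / q) δ y
    (deriv δ 0) (deriv y 0) hδdiff.hasDerivAt hydiff.hasDerivAt hδ0 hy0
    (fun n ε => (fun z : ℝ × ℝ =>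
      (z.1 + z.2 - δ ε - ε * f z.1, z.2 - δ ε - ε * f z.1))^[n] (x₀, 2 * π * p / q + y ε))
    (fun _ => rfl) (fun n ε => Function.iterate_succ_apply' _ _ _) q
  have hnhds : Set.Ioo (-ρ) ρ ∈ nhds (0 : ℝ) := Ioo_mem_nhds (by linarith) hρ
  have eX := (hX.congr_of_eventuallyEq (f₁ := fun _ => x₀ + 2 * π * p) (by
    filter_upwards [hnhds] with ε hε
    simp only [hperiodic ε hε])).unique (hasDerivAt_const _ _)
  have eV := (hV.congr_of_eventuallyEq (f₁ := fun ε => 2 * π * p / q + y ε) (by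
    filter_upwards [hnhds] with ε hε
    simp only [hperiodic ε hε])).unique (hydiff.hasDerivAt.const_add _)
  have hq0 : (q : ℝ) ≠ 0 := by positivity
  generalize ∑ k ∈ Finset.range q, f (x₀ + (k : ℝ) * (2 * π * p / q)) = S at *
  generalize ∑ k ∈ Finset.range q, ((q : ℝ) - (k : ℝ)) * f (x₀ + (k : ℝ) * (2 * π * p / q)) = T
    at *
  have hd : deriv δ 0 = -((1 / (q : ℝ)) * S) := by
    field_simp
    linarith
  refine ⟨hd, ?_⟩
  rw [hd] at eX
  field_simp at eX ⊢
  linarith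
end

section
/- Let p > 0, q > 0 be integers, μ = 2πp/q, let f : ℝ → ℝ be 2π-periodic and real-analytic, and let ε̄ > 0 and Δ, Y : ℝ × (−ε̄, ε̄) → ℝ be functions, continuous, 2π-periodic in x, with Δ(x, 0) = Y(x, 0) = 0, satisfying: (a) for all x and |ε| < ε̄, (x, μ + Y(x, ε)) is a p/q periodic point of F_{ε, Δ(x,ε)}; and (b) if |ε|, |y₀|, |δ| < ε̄ and R_q(x, y₀, ε, δ) = S_q(x, y₀, ε, δ) = 0 then y₀ = Y(x, ε) and δ = Δ(x, ε). Then there exists 0 < ρ ≤ ε̄ such that for all |ε| < ρ and all x₀ ∈ ℝ, setting y₁ = Y(x₀, ε) − Δ(x₀, ε) − ε f(x₀) and x₁ = x₀ + μ + y₁, one has Δ(x₁, ε) = Δ(x₀, ε) and Y(x₁, ε) = y₁. -/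
/-!
The point `(x₁, μ + y₁)` is the image of the `p/q` periodic point `(x₀, μ + Y(x₀, ε))` under
`F = F_{ε, Δ(x₀, ε)}`. As `F` commutes with itself and, by periodicity of `f`, with the translation
by `(2πp, 0)`, this image is again a `p/q` periodic point of the same map. The change of variables
`v = μ + y` turns this into `R_q = S_q = 0` at `(x₁, y₁)` with parameter `δ = Δ(x₀, ε)`, and the
uniqueness property then gives both equalities, provided `|y₁|` and `|Δ(x₀, ε)|` are less than `ε̄`.

Both quantities are continuous and vanish at `ε = 0`, so they are small for small `ε`; that the
threshold `ρ` can be chosen uniformly in `x₀` follows from compactness of `[0, 2π]` (tube lemma)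
and periodicity in `x₀`.
-/

open Real

open Filter Topology

/-- A function of `(x, ε)` that is periodic in `x`, continuous near `ε = 0` and zero there is
small for small `ε`, uniformly in `x`. -/
lemma eventually_forall_abs_lt_of_periodic {c r : ℝ} (hc : 0 < c) (hr : 0 < r) (h : ℝ → ℝ → ℝ)
    (hcont : ContinuousOn (fun w : ℝ × ℝ => h w.1 w.2) (Set.univ ×ˢ Set.Ioo (-r) r))
    (hper : ∀ x ε, h (x + c) ε = h x ε) (h0 : ∀ x, h x 0 = 0) :
    ∀ᶠ ε in 𝓝 (0 : ℝ), ∀ x, |h x ε| < r := by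
  have key : ∀ᶠ ε in 𝓝 (0 : ℝ), ∀ x ∈ Set.Icc 0 c, |h x ε| < r := by
    refine isCompact_Icc.eventually_forall_of_forall_eventually fun x _ => ?_
    have hca : ContinuousAt (fun w : ℝ × ℝ => h w.1 w.2) (x, 0) :=
      hcont.continuousAt ((isOpen_univ.prod isOpen_Ioo).mem_nhds (by simp [hr]))
    have hcs : ContinuousAt (fun z : ℝ × ℝ => |h z.2 z.1|) (0, x) :=
      (hca.comp_of_eq (f := Prod.swap) continuous_swap.continuousAt rfl).abs
    exact hcs.eventually_lt continuousAt_const (by simpa [h0] using hr)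
  filter_upwards [key] with ε hε x
  obtain ⟨y, hy, hxy⟩ := Function.Periodic.exists_mem_Ico₀ (f := fun x => h x ε)
    (fun x => hper x ε) hc x
  have := hε y ⟨hy.1, hy.2.le⟩
  simpa only [hxy] using this

/-- Invariance of `Δ` and `Y` along the orbit.  Let `μ = 2πp/q` and let `Δ, Y` be continuous,
`2π`-periodic in `x`, vanishing at `ε = 0`, and satisfying (a) the defining property that
`(x, μ + Y(x,ε))` is a `p/q` periodic point of `F_{ε, Δ(x,ε)}`, and (b) the uniqueness
property (expressed via `R_q = S_q = 0`, i.e. `G_{ε,δ}^q (x, y₀) = (x + qμ, y₀)` in shifted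
coordinates).  Then there is `0 < ρ ≤ ε̄` such that for `|ε| < ρ`, setting
`y₁ = Y(x₀,ε) − Δ(x₀,ε) − ε f(x₀)` and `x₁ = x₀ + μ + y₁`, one has
`Δ(x₁, ε) = Δ(x₀, ε)` and `Y(x₁, ε) = y₁`. -/
theorem Delta_Y_constant_along_orbit
    (p q : ℕ) (hp : 0 < p) (hq : 0 < q)
    (f : ℝ → ℝ) (hper : ∀ x : ℝ, f (x + 2 * π) = f x)
    (hfa : AnalyticOnNhd ℝ f Set.univ)
    (εbar : ℝ) (hεbar : 0 < εbar)
    (Δ Y : ℝ → ℝ → ℝ)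
    (hΔcont : ContinuousOn (fun w : ℝ × ℝ => Δ w.1 w.2) (Set.univ ×ˢ Set.Ioo (-εbar) εbar))
    (hYcont : ContinuousOn (fun w : ℝ × ℝ => Y w.1 w.2) (Set.univ ×ˢ Set.Ioo (-εbar) εbar))
    (hxper : ∀ x ε : ℝ, Δ (x + 2 * π) ε = Δ x ε ∧ Y (x + 2 * π) ε = Y x ε)
    (h0 : ∀ x : ℝ, Δ x 0 = 0 ∧ Y x 0 = 0)
    (hdef : ∀ x ε : ℝ, |ε| < εbar →
      (fun z : ℝ × ℝ =>
          (z.1 + z.2 - Δ x ε - ε * f z.1, z.2 - Δ x ε - ε * f z.1))^[q]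
        (x, 2 * π * p / q + Y x ε) = (x + 2 * π * p, 2 * π * p / q + Y x ε))
    (huniq : ∀ x ε y₀ δ : ℝ, |ε| < εbar → |y₀| < εbar → |δ| < εbar →
      (fun z : ℝ × ℝ =>
          (z.1 + z.2 + 2 * π * p / q + (-δ - ε * f z.1),
           z.2 + (-δ - ε * f z.1)))^[q] (x, y₀) = (x + (q : ℝ) * (2 * π * p / q), y₀) →
      y₀ = Y x ε ∧ δ = Δ x ε) :
    ∃ ρ : ℝ, 0 < ρ ∧ ρ ≤ εbar ∧
      ∀ ε : ℝ, |ε| < ρ → ∀ x₀ : ℝ,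
        Δ (x₀ + 2 * π * p / q + (Y x₀ ε - Δ x₀ ε - ε * f x₀)) ε = Δ x₀ ε ∧
        Y (x₀ + 2 * π * p / q + (Y x₀ ε - Δ x₀ ε - ε * f x₀)) ε
          = Y x₀ ε - Δ x₀ ε - ε * f x₀ := by
  have hperp : ∀ x, f (x + 2 * π * p) = f x := by
    intro x
    have := (show Function.Periodic f (2 * π) from hper).nat_mul p x
    rwa [mul_comm] at this
  have hfc : Continuous f := continuousOn_univ.1 hfa.continuousOn
  have h1 := eventually_forall_abs_lt_of_periodic two_pi_pos hεbar Δ hΔcont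
    (fun x ε => (hxper x ε).1) fun x => (h0 x).1
  have h2 := eventually_forall_abs_lt_of_periodic two_pi_pos hεbar
    (fun x ε => Y x ε - Δ x ε - ε * f x)
    ((hYcont.sub hΔcont).sub (by fun_prop))
    (fun x ε => by simp only [(hxper x ε).1, (hxper x ε).2, hper]) fun x => by simp [h0]
  obtain ⟨ρ, hρ, hball⟩ := Metric.eventually_nhds_iff.1 (h1.and h2)
  refine ⟨min ρ εbar, lt_min hρ hεbar, min_le_right _ _, fun ε hε x₀ => ?_⟩
  have hεb : |ε| < εbar := hε.trans_le (min_le_right _ _)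
  obtain ⟨hΔs, hys⟩ := @hball ε (by simpa using hε.trans_le (min_le_left _ _))
  suffices hit : (fun z : ℝ × ℝ =>
      (z.1 + z.2 + 2 * π * p / q + (-(Δ x₀ ε) - ε * f z.1),
        z.2 + (-(Δ x₀ ε) - ε * f z.1)))^[q]
      (x₀ + 2 * π * p / q + (Y x₀ ε - Δ x₀ ε - ε * f x₀), Y x₀ ε - Δ x₀ ε - ε * f x₀) =
      (x₀ + 2 * π * p / q + (Y x₀ ε - Δ x₀ ε - ε * f x₀) + (q : ℝ) * (2 * π * p / q),
        Y x₀ ε - Δ x₀ ε - ε * f x₀) by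
    obtain ⟨hY, hΔ⟩ := huniq _ ε _ (Δ x₀ ε) hεb (hys x₀) (hΔs x₀) hit
    exact ⟨hΔ.symm, hY.symm⟩
  have hd := hdef x₀ ε hεb
  set F : ℝ × ℝ → ℝ × ℝ := fun z =>
    (z.1 + z.2 - Δ x₀ ε - ε * f z.1, z.2 - Δ x₀ ε - ε * f z.1) with hF
  set G : ℝ × ℝ → ℝ × ℝ := fun z =>
    (z.1 + z.2 + 2 * π * p / q + (-(Δ x₀ ε) - ε * f z.1), z.2 + (-(Δ x₀ ε) - ε * f z.1)) with hG
  -- `T` passes from the shifted coordinate `y` to `v = μ + y`.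
  let T : ℝ × ℝ → ℝ × ℝ := fun z => (z.1, 2 * π * p / q + z.2)
  have hT : Function.Injective T := by
    rintro ⟨a, b⟩ ⟨c, d⟩ h
    simpa [T] using h
  have hsemi : Function.Semiconj T G F := by
    intro z
    ext <;> simp only [T, hF, hG] <;> ring
  have hqμ : (q : ℝ) * (2 * π * p / q) = 2 * π * p :=
    mul_div_cancel₀ _ (Nat.cast_ne_zero.2 hq.ne')
  have hT1 : T (x₀ + 2 * π * p / q + (Y x₀ ε - Δ x₀ ε - ε * f x₀), Y x₀ ε - Δ x₀ ε - ε * f x₀) =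
      F (x₀, 2 * π * p / q + Y x₀ ε) := by
    ext <;> simp only [T, hF] <;> ring
  apply hT
  rw [(hsemi.iterate_right q).eq, hT1, ← Function.iterate_succ_apply, Function.iterate_succ_apply',
    hd, hqμ]
  ext <;> simp only [T, hF, hperp] <;> ring
end

section
/- Let p > 0, q > 0 be integers, μ = 2πp/q, let f : ℝ → ℝ be 2π-periodic and real-analytic, and let ε̄ > 0 and Δ, Y : ℝ × (−ε̄, ε̄) → ℝ be continuous functions, 2π-periodic in x and real-analytic in ε, with Δ(x, 0) = Y(x, 0) = 0, satisfying the defining property (for all x and |ε| < ε̄, (x, μ + Y(x, ε)) is a p/q periodic point of F_{ε, Δ(x,ε)}) and the uniqueness property (if |ε|, |y₀|, |δ| < ε̄ and (x, μ + y₀) is a p/q periodic point of F_{ε,δ} then y₀ = Y(x, ε) and δ = Δ(x, ε)). Let r ≥ 1 be an integer and suppose that for every 1 ≤ m ≤ r − 1 the Taylor coefficient Δ_m(x) := (1/m!)·(∂^m Δ/∂ε^m)(x, 0) does not depend on x. Then the r-th coefficient Δ_r(x) := (1/r!)·(∂^r Δ/∂ε^r)(x, 0) is periodic with period μ: Δ_r(x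 + μ) = Δ_r(x) for all x ∈ ℝ. -/
open Real

/-!
Put `μ = 2πp/q`. Since `F = F_{ε,δ}` commutes with the translation of `x` by `2πp`, it carries
`p/q` periodic points to `p/q` periodic points for the same parameters (`cyl_periodic`). Apply this
to `(x, μ + Y(x,ε))` with `δ = Δ(x,ε)`: its image has first coordinate
`x₁(ε) = x + μ + Y(x,ε) - Δ(x,ε) - ε f(x)` and, for small `ε`, second coordinate close to `μ`, so
uniqueness gives `Δ(x₁(ε), ε) = Δ(x, ε)`, where `x₁(ε) → x + μ` as `ε → 0`.

The functions `Δ(x₁(ε), ·)` and `Δ(x, ·)` have the same Taylor polynomial of degree `r - 1` at `0`.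
As they agree at `ε`, the Lagrange form of the remainder gives `s, t ∈ (0, ε)` with
`∂_ε^r Δ(x₁(ε), s) = ∂_ε^r Δ(x, t)` (`exists_iteratedDeriv_eq`). Letting `ε → 0` yields the claim,
provided that `∂_ε^r Δ` is jointly continuous at `(x + μ, 0)`.

Joint continuity of `Δ` together with analyticity in `ε` alone would not give this. It follows from
the equation that `Δ` solves: at `ε = 0` the `q`-th iterate is affine with Jacobian `-q² ≠ 0` in
`(y, δ)` (`fderiv_defect_injective`), so by the inverse function theorem the periodic points near
`(x₀, μ)` are given by a jointly analytic function of `(x, ε)`, which uniqueness identifies with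
`Δ` (`contDiffAt_delta`).
-/

open Filter Topology Set Function
open scoped ContDiff

namespace LeadingCoefficient

/-! ### The cylinder map and its periodic orbits -/

/-- The cylinder map `F_{ε,δ}`. -/
noncomputable def cyl (f : ℝ → ℝ) (ε δ : ℝ) (z : ℝ × ℝ) : ℝ × ℝ :=
  (z.1 + z.2 - δ - ε * f z.1, z.2 - δ - ε * f z.1)

lemma cyl_translate {f : ℝ → ℝ} (hper : ∀ x : ℝ, f (x + 2 * π) = f x) (p : ℕ) (ε δ x v : ℝ) :
    cyl f ε δ (x + 2 * π * p, v) = ((cyl f ε δ (x, v)).1 + 2 * π * p, (cyl f ε δ (x, v)).2) := by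
  have h : f (x + 2 * π * p) = f x := by
    have := Function.Periodic.nat_mul (show Function.Periodic f (2 * π) from hper) p x
    rwa [mul_comm (2 * π) (p : ℝ)]
  simp only [cyl, h, Prod.mk.injEq, and_true]
  ring

/-- The cylinder map carries a `p/q` periodic orbit to itself, since it commutes with the
translation by `2πp`. -/
lemma cyl_periodic {f : ℝ → ℝ} (hper : ∀ x : ℝ, f (x + 2 * π) = f x) (p q : ℕ) (ε δ x v : ℝ)
    (h : (cyl f ε δ)^[q] (x, v) = (x + 2 * π * p, v)) :
    (cyl f ε δ)^[q] (cyl f ε δ (x, v))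
      = ((cyl f ε δ (x, v)).1 + 2 * π * p, (cyl f ε δ (x, v)).2) := by
  rw [← Function.iterate_succ_apply, Function.iterate_succ_apply', h, cyl_translate hper]

/-- For `ε = 0` the iterates are affine in all variables. -/
lemma cyl_iterate_zero (f : ℝ → ℝ) (δ x v : ℝ) (k : ℕ) :
    (cyl f 0 δ)^[k] (x, v) = (x + k * v - k * (k + 1) / 2 * δ, v - k * δ) := by
  induction k with
  | zero => simp
  | succ k ih =>
    rw [Function.iterate_succ_apply', ih]
    simp only [cyl, Prod.mk.injEq]
    push_cast
    constructor <;> ring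

/-! ### Joint analyticity of `Δ` -/

/-- The map `(x, ε, y, δ) ↦ (x, ε, defects)`, whose last two components vanish exactly when
`(x, μ + y)` is a `p/q` periodic point of `F_{ε,δ}`. -/
noncomputable def defect (f : ℝ → ℝ) (p q : ℕ) (w : ℝ × ℝ × ℝ × ℝ) : ℝ × ℝ × ℝ × ℝ :=
  (w.1, w.2.1,
    ((cyl f w.2.1 w.2.2.2)^[q] (w.1, 2 * π * p / q + w.2.2.1)).1 - w.1 - 2 * π * p,
    ((cyl f w.2.1 w.2.2.2)^[q] (w.1, 2 * π * p / q + w.2.2.1)).2 - 2 * π * p / q - w.2.2.1)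

lemma contDiff_defect {f : ℝ → ℝ} (hf : ContDiff ℝ ω f) (p q : ℕ) :
    ContDiff ℝ ω (defect f p q) := by
  have key : ∀ k : ℕ, ContDiff ℝ ω (fun w : ℝ × ℝ × ℝ × ℝ =>
      (cyl f w.2.1 w.2.2.2)^[k] (w.1, 2 * π * p / q + w.2.2.1)) := by
    intro k
    induction k with
    | zero => simp only [Function.iterate_zero, id]; fun_prop
    | succ k ih =>
      simp only [Function.iterate_succ_apply']
      unfold cyl at ih ⊢
      fun_prop
  have := key q
  unfold defect
  fun_prop

lemma defect_zero (f : ℝ → ℝ) (p : ℕ) {q : ℕ} (hq : 0 < q) (x y δ : ℝ) :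
    defect f p q (x, 0, y, δ) = (x, 0, q * y - q * (q + 1) / 2 * δ, - (q * δ)) := by
  have hq' : (q : ℝ) ≠ 0 := by positivity
  simp only [defect, cyl_iterate_zero, Prod.mk.injEq, true_and]
  constructor
  · field_simp; ring
  · ring

/-- The unperturbed twist makes the derivative of `defect` injective, hence invertible, at
`ε = y = δ = 0`. -/
lemma fderiv_defect_injective {f : ℝ → ℝ} (hf : ContDiff ℝ ω f) (p : ℕ) {q : ℕ} (hq : 0 < q)
    (x : ℝ) : Function.Injective (fderiv ℝ (defect f p q) (x, 0, 0, 0)) := by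
  have hq' : (q : ℝ) ≠ 0 := by positivity
  have hd : HasFDerivAt (defect f p q) (fderiv ℝ (defect f p q) (x, 0, 0, 0)) (x, 0, 0, 0) :=
    ((contDiff_defect hf p q).differentiable (by simp) _).hasFDerivAt
  set L := fderiv ℝ (defect f p q) (x, 0, 0, 0) with hL
  rw [injective_iff_map_eq_zero]
  rintro ⟨a, b, c, d⟩ h
  have h1 : (L (a, b, c, d)).1 = a := by
    have e := hd.fst.unique (f := fun w => (defect f p q w).1)
      (hasFDerivAt_fst (𝕜 := ℝ) (p := ((x, 0, 0, 0) : ℝ × ℝ × ℝ × ℝ)))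
    simpa using congrArg (fun M => M (a, b, c, d)) e
  have h2 : (L (a, b, c, d)).2.1 = b := by
    have e := hd.snd.fst.unique (f := fun w => (defect f p q w).2.1)
      (hasFDerivAt_snd (𝕜 := ℝ) (p := ((x, 0, 0, 0) : ℝ × ℝ × ℝ × ℝ))).fst
    simpa using congrArg (fun M => M (a, b, c, d)) e
  rw [h] at h1 h2
  simp only [Prod.fst_zero, Prod.snd_zero] at h1 h2
  subst h1 h2
  -- In the remaining directions `defect` is explicit along the line `t ↦ (x, 0, t c, t d)`.
  have hline : HasDerivAt (fun t : ℝ => ((x, 0, t * c, t * d) : ℝ × ℝ × ℝ × ℝ)) (0, 0, c, d) 0 := by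
    refine (hasDerivAt_const _ _).prodMk ((hasDerivAt_const _ _).prodMk (HasDerivAt.prodMk ?_ ?_))
    · simpa using (hasDerivAt_id (0 : ℝ)).mul_const c
    · simpa using (hasDerivAt_id (0 : ℝ)).mul_const d
  have hcomp := HasFDerivAt.comp_hasDerivAt
    (f := fun t : ℝ => ((x, 0, t * c, t * d) : ℝ × ℝ × ℝ × ℝ))
    (l := defect f p q) (l' := L) (0 : ℝ) (by simpa using hd) hline
  rw [h] at hcomp
  have hexp : HasDerivAt (defect f p q ∘ fun t : ℝ => ((x, 0, t * c, t * d) : ℝ × ℝ × ℝ × ℝ))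
      (0, 0, q * c - q * (q + 1) / 2 * d, - (q * d)) 0 := by
    have : (defect f p q ∘ fun t : ℝ => ((x, 0, t * c, t * d) : ℝ × ℝ × ℝ × ℝ))
        = fun t : ℝ => (x, 0, t * (q * c - q * (q + 1) / 2 * d), t * (- (q * d))) := by
      funext t
      simp only [Function.comp, defect_zero f p hq, Prod.mk.injEq, true_and]
      constructor <;> ring
    rw [this]
    refine (hasDerivAt_const _ _).prodMk ((hasDerivAt_const _ _).prodMk (HasDerivAt.prodMk ?_ ?_))
    · simpa using (hasDerivAt_id (0 : ℝ)).mul_const (q * c - q * (q + 1) / 2 * d)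
    · simpa using (hasDerivAt_id (0 : ℝ)).mul_const (- (q * d))
  have e := hexp.unique hcomp
  simp only [Prod.ext_iff, Prod.fst_zero, Prod.snd_zero, true_and] at e
  obtain ⟨e1, e2⟩ := e
  have hd0 : d = 0 := by simpa [hq'] using e2
  subst hd0
  have hc0 : c = 0 := by simpa [hq'] using e1
  subst hc0
  rfl

/-- By the inverse function theorem and the uniqueness property, `Δ` is jointly analytic near
every point `(x₀, 0)`. -/
lemma contDiffAt_delta {f : ℝ → ℝ} (hf : ContDiff ℝ ω f) (p : ℕ) {q : ℕ} (hq : 0 < q)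
    {εbar : ℝ} (hεbar : 0 < εbar) {Δ Y : ℝ → ℝ → ℝ}
    (huniq : ∀ x ε y₀ δ : ℝ, |ε| < εbar → |y₀| < εbar → |δ| < εbar →
      (cyl f ε δ)^[q] (x, 2 * π * p / q + y₀) = (x + 2 * π * p, 2 * π * p / q + y₀) →
      y₀ = Y x ε ∧ δ = Δ x ε) (x₀ : ℝ) :
    ContDiffAt ℝ ω (fun w : ℝ × ℝ => Δ w.1 w.2) (x₀, 0) := by
  have hcd := (contDiff_defect hf p q).contDiffAt (x := (x₀, 0, 0, 0))
  let e : (ℝ × ℝ × ℝ × ℝ) ≃L[ℝ] (ℝ × ℝ × ℝ × ℝ) :=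
    (LinearEquiv.ofInjectiveEndo (fderiv ℝ (defect f p q) (x₀, 0, 0, 0)).toLinearMap
      (fderiv_defect_injective hf p hq x₀)).toContinuousLinearEquiv
  have he : (e : (ℝ × ℝ × ℝ × ℝ) →L[ℝ] (ℝ × ℝ × ℝ × ℝ))
      = fderiv ℝ (defect f p q) (x₀, 0, 0, 0) := by
    ext <;> rfl
  have hd : HasFDerivAt (defect f p q) (e : (ℝ × ℝ × ℝ × ℝ) →L[ℝ] (ℝ × ℝ × ℝ × ℝ))
      (x₀, 0, 0, 0) := by
    rw [he]; exact (hcd.differentiableAt (by simp)).hasFDerivAt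
  have hs := hcd.hasStrictFDerivAt' hd (by simp)
  have hinv : ContDiffAt ℝ ω (hs.localInverse (defect f p q) e (x₀, 0, 0, 0))
      (defect f p q (x₀, 0, 0, 0)) := hcd.to_localInverse hd (by simp)
  have himg := hs.localInverse_apply_image
  have hright := hs.eventually_right_inverse
  have h00 : defect f p q (x₀, 0, 0, 0) = (x₀, 0, 0, 0) := by simp [defect_zero f p hq]
  rw [h00] at hinv himg hright
  set g := hs.localInverse (defect f p q) e (x₀, 0, 0, 0) with hg
  have hι : ContDiff ℝ ω (fun w : ℝ × ℝ => ((w.1, w.2, 0, 0) : ℝ × ℝ × ℝ × ℝ)) := by fun_prop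
  have hιc : Tendsto (fun w : ℝ × ℝ => ((w.1, w.2, 0, 0) : ℝ × ℝ × ℝ × ℝ)) (𝓝 (x₀, 0))
      (𝓝 (x₀, 0, 0, 0)) := hι.continuous.tendsto (x₀, 0)
  have hgι : ContDiffAt ℝ ω (fun w : ℝ × ℝ => g (w.1, w.2, 0, 0)) (x₀, 0) :=
    ContDiffAt.comp (g := g) (x₀, 0) hinv hι.contDiffAt
  have hgδ : ContDiffAt ℝ ω (fun w : ℝ × ℝ => (g (w.1, w.2, 0, 0)).2.2.2) (x₀, 0) :=
    hgι.snd.snd.snd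
  refine hgδ.congr_of_eventuallyEq ?_
  have hlim : Tendsto (fun w : ℝ × ℝ => g (w.1, w.2, 0, 0)) (𝓝 (x₀, 0)) (𝓝 (x₀, 0, 0, 0)) := by
    have := hgι.continuousAt.tendsto
    simpa only [himg] using this
  have hsmall : ∀ᶠ s : ℝ × ℝ × ℝ × ℝ in 𝓝 (x₀, 0, 0, 0),
      |s.2.1| < εbar ∧ |s.2.2.1| < εbar ∧ |s.2.2.2| < εbar := by
    refine ((?_ : Continuous fun s : ℝ × ℝ × ℝ × ℝ => |s.2.1|).tendsto _ |>.eventually_lt_const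
      (by simpa)).and (((?_ : Continuous fun s : ℝ × ℝ × ℝ × ℝ => |s.2.2.1|).tendsto _
      |>.eventually_lt_const (by simpa)).and ((?_ : Continuous fun s : ℝ × ℝ × ℝ × ℝ =>
      |s.2.2.2|).tendsto _ |>.eventually_lt_const (by simpa))) <;> fun_prop
  filter_upwards [hlim.eventually hsmall, hιc.eventually hright] with w hw hr
  generalize g (w.1, w.2, 0, 0) = s at hw hr
  obtain ⟨a, b, c, d⟩ := s
  simp only [defect, Prod.mk.injEq] at hr
  obtain ⟨rfl, rfl, h3, h4⟩ := hr
  exact ((huniq _ _ c d hw.1 hw.2.1 hw.2.2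
    (Prod.ext (by simp only; linarith) (by simp only; linarith))).2).symm

lemma contDiffAt_partial {G : ℝ × ℝ → ℝ} {w : ℝ × ℝ} (h : ContDiffAt ℝ ω G w) :
    ContDiffAt ℝ ω (fun u : ℝ × ℝ => deriv (fun ε => G (u.1, ε)) u.2) w := by
  have h1 : ContDiffAt ℝ ω (fun u => fderiv ℝ G u (0, 1)) w :=
    (h.fderiv_right (m := ω) (by simp)).clm_apply contDiffAt_const
  refine h1.congr_of_eventuallyEq ?_
  filter_upwards [h.eventually (by simp)] with u hu
  have hl : HasDerivAt (fun ε : ℝ => (u.1, ε)) (0, 1) u.2 :=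
    (hasDerivAt_const _ _).prodMk (hasDerivAt_id _)
  exact ((hu.differentiableAt (by simp)).hasFDerivAt.comp_hasDerivAt u.2 hl).deriv

lemma contDiffAt_iteratedDeriv {Δ : ℝ → ℝ → ℝ} {w : ℝ × ℝ}
    (h : ContDiffAt ℝ ω (fun w : ℝ × ℝ => Δ w.1 w.2) w) (r : ℕ) :
    ContDiffAt ℝ ω (fun u : ℝ × ℝ => iteratedDeriv r (Δ u.1) u.2) w := by
  induction r with
  | zero => simpa using h
  | succ r ih => simpa only [iteratedDeriv_succ] using contDiffAt_partial ih

/-! ### Comparison of leading coefficients -/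

/-- If two functions have the same Taylor polynomial of degree `n` at `0` and agree at some
`ε > 0`, then their `(n+1)`-st derivatives agree at two intermediate points. -/
lemma exists_iteratedDeriv_eq {g h : ℝ → ℝ} {ε : ℝ} (hε : 0 < ε) (n : ℕ)
    (hg : ∀ t ∈ Icc 0 ε, AnalyticAt ℝ g t) (hh : ∀ t ∈ Icc 0 ε, AnalyticAt ℝ h t)
    (hT : ∀ m ≤ n, iteratedDeriv m g 0 = iteratedDeriv m h 0) (heq : g ε = h ε) :
    ∃ s ∈ Ioo 0 ε, ∃ t ∈ Ioo 0 ε, iteratedDeriv (n + 1) g s = iteratedDeriv (n + 1) h t := by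
  obtain ⟨s, hs, hgs⟩ := taylor_mean_remainder_lagrange_iteratedDeriv (f := g) (n := n) hε.ne
    (fun t ht => (hg t (uIcc_of_le hε.le ▸ ht)).contDiffAt.contDiffWithinAt)
  obtain ⟨t, ht, hht⟩ := taylor_mean_remainder_lagrange_iteratedDeriv (f := h) (n := n) hε.ne
    (fun t ht => (hh t (uIcc_of_le hε.le ▸ ht)).contDiffAt.contDiffWithinAt)
  rw [uIcc_of_le hε.le] at hgs hht
  rw [uIoo_of_le hε.le] at hs ht
  refine ⟨s, hs, t, ht, ?_⟩
  have h0 : (0 : ℝ) ∈ Icc 0 ε := ⟨le_rfl, hε.le⟩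
  have hP : taylorWithinEval g n (Icc 0 ε) 0 ε = taylorWithinEval h n (Icc 0 ε) 0 ε := by
    rw [taylor_within_apply, taylor_within_apply]
    refine Finset.sum_congr rfl fun m hm => ?_
    rw [iteratedDerivWithin_eq_iteratedDeriv (uniqueDiffOn_Icc hε) (hg 0 h0).contDiffAt h0,
      iteratedDerivWithin_eq_iteratedDeriv (uniqueDiffOn_Icc hε) (hh 0 h0).contDiffAt h0,
      hT m (by have := Finset.mem_range.1 hm; omega)]
  rw [heq, hP, hht] at hgs
  have hc : (ε - 0) ^ (n + 1) / ((n + 1).factorial : ℝ) ≠ 0 := by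
    have : 0 < ε - 0 := by simpa
    positivity
  rw [mul_div_assoc, mul_div_assoc] at hgs
  exact (mul_right_cancel₀ hc hgs).symm

end LeadingCoefficient
open LeadingCoefficient

/-- **Periodicity lemma.**  Let `μ = 2πp/q`, let `f` be `2π`-periodic and real-analytic, and
let `Δ, Y` be continuous, `2π`-periodic in `x`, real-analytic in `ε`, vanishing at `ε = 0`,
satisfying the defining property ((x, μ + Y(x,ε)) is a `p/q` periodic point of
`F_{ε,Δ(x,ε)}`) and the uniqueness property.  If for every `1 ≤ m ≤ r − 1` the Taylor
coefficient `Δ_m(x) = (1/m!)·∂^m Δ/∂ε^m (x,0)` does not depend on `x`, then the `r`-th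
coefficient is `μ`-periodic: `Δ_r(x + μ) = Δ_r(x)` for all `x`. -/
theorem periodicity_of_leading_coefficient
    (p q : ℕ) (hp : 0 < p) (hq : 0 < q)
    (f : ℝ → ℝ) (hper : ∀ x : ℝ, f (x + 2 * π) = f x)
    (hfa : AnalyticOnNhd ℝ f Set.univ)
    (εbar : ℝ) (hεbar : 0 < εbar)
    (Δ Y : ℝ → ℝ → ℝ)
    (hΔcont : ContinuousOn (fun w : ℝ × ℝ => Δ w.1 w.2) (Set.univ ×ˢ Set.Ioo (-εbar) εbar))
    (hYcont : ContinuousOn (fun w : ℝ × ℝ => Y w.1 w.2) (Set.univ ×ˢ Set.Ioo (-εbar) εbar))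
    (hxper : ∀ x ε : ℝ, Δ (x + 2 * π) ε = Δ x ε ∧ Y (x + 2 * π) ε = Y x ε)
    (hanal : ∀ x : ℝ, AnalyticOnNhd ℝ (Δ x) (Set.Ioo (-εbar) εbar) ∧
                      AnalyticOnNhd ℝ (Y x) (Set.Ioo (-εbar) εbar))
    (h0 : ∀ x : ℝ, Δ x 0 = 0 ∧ Y x 0 = 0)
    (hdef : ∀ x ε : ℝ, |ε| < εbar →
      (fun z : ℝ × ℝ =>
          (z.1 + z.2 - Δ x ε - ε * f z.1, z.2 - Δ x ε - ε * f z.1))^[q]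
        (x, 2 * π * p / q + Y x ε) = (x + 2 * π * p, 2 * π * p / q + Y x ε))
    (huniq : ∀ x ε y₀ δ : ℝ, |ε| < εbar → |y₀| < εbar → |δ| < εbar →
      (fun z : ℝ × ℝ =>
          (z.1 + z.2 - δ - ε * f z.1, z.2 - δ - ε * f z.1))^[q]
        (x, 2 * π * p / q + y₀) = (x + 2 * π * p, 2 * π * p / q + y₀) →
      y₀ = Y x ε ∧ δ = Δ x ε)
    (r : ℕ) (hr : 1 ≤ r)
    (hconst : ∀ m : ℕ, 1 ≤ m → m ≤ r - 1 → ∀ x x' : ℝ,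
      (1 / (m.factorial : ℝ)) * iteratedDeriv m (Δ x) 0
        = (1 / (m.factorial : ℝ)) * iteratedDeriv m (Δ x') 0) :
    ∀ x : ℝ,
      (1 / (r.factorial : ℝ)) * iteratedDeriv r (Δ (x + 2 * π * p / q)) 0
        = (1 / (r.factorial : ℝ)) * iteratedDeriv r (Δ x) 0 := by
  have hcd : ContDiff ℝ ω f := hfa.contDiff
  have hdef' : ∀ x ε : ℝ, |ε| < εbar → (cyl f ε (Δ x ε))^[q] (x, 2 * π * p / q + Y x ε)
      = (x + 2 * π * p, 2 * π * p / q + Y x ε) := hdef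
  have huniq' : ∀ x ε y₀ δ : ℝ, |ε| < εbar → |y₀| < εbar → |δ| < εbar →
      (cyl f ε δ)^[q] (x, 2 * π * p / q + y₀) = (x + 2 * π * p, 2 * π * p / q + y₀) →
      y₀ = Y x ε ∧ δ = Δ x ε := huniq
  intro x
  congr 1
  obtain ⟨n, rfl⟩ : ∃ n, r = n + 1 := ⟨r - 1, by omega⟩
  have hcoeff : ∀ a b : ℝ, ∀ m ≤ n, iteratedDeriv m (Δ a) 0 = iteratedDeriv m (Δ b) 0 := by
    intro a b m hm
    rcases Nat.eq_zero_or_pos m with rfl | hm0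
    · simp [(h0 a).1, (h0 b).1]
    · exact mul_left_cancel₀ (by positivity) (hconst m hm0 (by omega) a b)
  have hmem : (0 : ℝ) ∈ Ioo (-εbar) εbar := ⟨by linarith, hεbar⟩
  have hΔ0 : Tendsto (Δ x) (𝓝 0) (𝓝 0) := by
    simpa [(h0 x).1] using ((hanal x).1 0 hmem).continuousAt.tendsto
  have hY0 : Tendsto (Y x) (𝓝 0) (𝓝 0) := by
    simpa [(h0 x).2] using ((hanal x).2 0 hmem).continuousAt.tendsto
  have hid : Tendsto (fun ε : ℝ => ε) (𝓝 0) (𝓝 0) := tendsto_id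
  -- `y₁ ε` and `x₁ ε` are the coordinates of the image of the periodic point, `y₁` relative to `μ`.
  set y₁ : ℝ → ℝ := fun ε => Y x ε - Δ x ε - ε * f x with hy₁
  set x₁ : ℝ → ℝ := fun ε => x + 2 * π * p / q + y₁ ε with hx₁
  have hy₁0 : Tendsto y₁ (𝓝 0) (𝓝 0) := by
    simpa using (hY0.sub hΔ0).sub (hid.mul_const (f x))
  have hx₁0 : Tendsto x₁ (𝓝 0) (𝓝 (x + 2 * π * p / q)) := by
    simpa using hy₁0.const_add (x + 2 * π * p / q)
  have abs_small : ∀ u : ℝ → ℝ, Tendsto u (𝓝 0) (𝓝 0) → ∀ᶠ ε in 𝓝 0, |u ε| < εbar := by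
    intro u hu
    have := hu.abs
    rw [abs_zero] at this
    exact this.eventually_lt_const hεbar
  have hinter : ∀ᶠ ε in 𝓝[>] (0 : ℝ), ∃ s ∈ Ioo 0 ε, ∃ t ∈ Ioo 0 ε,
      iteratedDeriv (n + 1) (Δ (x₁ ε)) s = iteratedDeriv (n + 1) (Δ x) t := by
    filter_upwards [self_mem_nhdsWithin, nhdsWithin_le_nhds (abs_small _ hid),
      nhdsWithin_le_nhds (abs_small _ hy₁0), nhdsWithin_le_nhds (abs_small _ hΔ0)]
      with ε hpos hε hy hδ
    have hpos : 0 < ε := hpos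
    have himage : cyl f ε (Δ x ε) (x, 2 * π * p / q + Y x ε)
        = (x₁ ε, 2 * π * p / q + y₁ ε) := by
      simp only [cyl, hx₁, hy₁, Prod.mk.injEq]
      constructor <;> ring
    have hp1 := cyl_periodic hper p q ε (Δ x ε) _ _ (hdef' x ε hε)
    rw [himage] at hp1
    have heq := (huniq' _ _ _ _ hε hy hδ hp1).2
    have hsub : ∀ t ∈ Icc 0 ε, t ∈ Ioo (-εbar) εbar := fun t ht =>
      ⟨by linarith [ht.1], lt_of_le_of_lt ht.2 (lt_of_abs_lt hε)⟩
    exact exists_iteratedDeriv_eq hpos n (fun t ht => (hanal _).1 t (hsub t ht))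
      (fun t ht => (hanal _).1 t (hsub t ht)) (hcoeff _ _) heq.symm
  -- Choose the intermediate points as functions of `ε` and let `ε` decrease to `0`.
  obtain ⟨s, hs⟩ := hinter.choice
  obtain ⟨t, ht⟩ := (hs.mono fun _ h => h.2).choice
  have hid' : Tendsto (fun ε : ℝ => ε) (𝓝[>] 0) (𝓝 0) := tendsto_id.mono_left nhdsWithin_le_nhds
  have hs0 : Tendsto s (𝓝[>] 0) (𝓝 0) :=
    tendsto_of_tendsto_of_tendsto_of_le_of_le' tendsto_const_nhds hid'
      (hs.mono fun _ h => h.1.1.le) (hs.mono fun _ h => h.1.2.le)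
  have ht0 : Tendsto t (𝓝[>] 0) (𝓝 0) :=
    tendsto_of_tendsto_of_tendsto_of_le_of_le' tendsto_const_nhds hid'
      (ht.mono fun _ h => h.1.1.le) (ht.mono fun _ h => h.1.2.le)
  have hcont : ∀ a : ℝ, ContinuousAt
      (fun u : ℝ × ℝ => iteratedDeriv (n + 1) (Δ u.1) u.2) (a, 0) := fun a =>
    (contDiffAt_iteratedDeriv (contDiffAt_delta hcd p hq hεbar huniq' a) (n + 1)).continuousAt
  have hL := (hcont (x + 2 * π * p / q)).tendsto.comp
    ((hx₁0.mono_left nhdsWithin_le_nhds).prodMk_nhds hs0)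
  have hR := (hcont x).tendsto.comp ((tendsto_const_nhds (x := x)).prodMk_nhds ht0)
  exact tendsto_nhds_unique_of_eventuallyEq hL hR (ht.mono fun _ h => h.2)
end

section
/- Let p > 0, q > 0 be integers, μ = 2πp/q, let f : ℝ → ℝ be 2π-periodic and real-analytic, and let ε̄ > 0 and Δ, Y : ℝ × (−ε̄, ε̄) → ℝ satisfy: Δ(x, 0) = Y(x, 0) = 0, Δ and Y are real-analytic in ε, and for all x and |ε| < ε̄, R_q(x, Y(x, ε), ε, Δ(x, ε)) = S_q(x, Y(x, ε), ε, Δ(x, ε)) = 0. Fix x₀ ∈ ℝ and an integer r ≥ 1, suppose the Taylor coefficients Δ_m(x) := (1/m!)(∂^m Δ/∂ε^m)(x, 0) are independent of x for 1 ≤ m ≤ r − 1, and set A(ε) = Σ_{m=1}^{r−1} Δ_m ε^m and Δ_r(x) = (1/r!)(∂^r Δ/∂ε^r)(x, 0). Then, as ε → 0, R_q(x₀, Y(x₀, ε), ε, A(ε)) = (q(q+1)/2)·Δ_r(x₀)·ε^r + o(ε^r) and S_q(x₀, Y(x₀, ε), ε, A(ε)) = q·Δ_r(x₀)·ε^r +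 o(ε^r). -/
/-!
At the parameter value `δ = Δ(x₀, ε)` the orbit of `(x₀, Y(x₀, ε))` closes up, so the remainders
at `δ = A(ε)` are exactly the differences between the `q`-th points of the two orbits with the
same initial condition and the parameters `A(ε)` and `Δ(x₀, ε)`. By Taylor's theorem these
parameters differ by `η(ε) = Δ_r(x₀) ε^r + o(ε^r)` (`taylor_tail_isLittleO`). At each step the
difference of the second coordinates grows by `η(ε) - ε (f(x') - f(x))`. As `ε → 0` both orbits
converge to the same unperturbed one, and `f` is locally Lipschitz, so as long as `x' - x` is
`O(ε^r)` the second term is `O(ε^(r+1))`. By induction the `k`-th differences are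
`(k(k+1)/2) Δ_r ε^r + o(ε^r)` and `k Δ_r ε^r + o(ε^r)` (`kickMap_iterate_sub`), the first being the
sum of the second ones over `1, …, k`.
-/

open Real Filter Asymptotics Topology

/-- The map `G(x, y) = (x + y + μ + g(x), y + g(x))` with `g(x) = -δ - ε f(x)`. -/
def kickMap (f : ℝ → ℝ) (μ δ ε : ℝ) (z : ℝ × ℝ) : ℝ × ℝ :=
  (z.1 + z.2 + μ + (-δ - ε * f z.1), z.2 + (-δ - ε * f z.1))

theorem taylor_tail_isLittleO (g : ℝ → ℝ) (hg : AnalyticAt ℝ g 0) (hg0 : g 0 = 0)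
    (r : ℕ) (hr : 1 ≤ r) :
    (fun ε : ℝ => g ε
        - (∑ m ∈ Finset.Ico 1 r, ((1 / (m.factorial : ℝ)) * iteratedDeriv m g 0) * ε ^ m)
        - ((1 / (r.factorial : ℝ)) * iteratedDeriv r g 0) * ε ^ r)
      =o[𝓝 (0 : ℝ)] (fun ε : ℝ => ε ^ r) := by
  have h1 := hg.hasFPowerSeriesAt.isBigO_sub_partialSum_pow (r + 1)
  have h2 : (fun ε : ℝ => ‖ε‖ ^ (r + 1)) =o[𝓝 (0 : ℝ)] (fun ε : ℝ => ε ^ r) := by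
    have := isLittleO_pow_pow (𝕜 := ℝ) (Nat.lt_succ_self r)
    simpa only [norm_pow] using this.norm_left
  refine (h1.trans_isLittleO h2).congr_left fun ε => ?_
  -- The constant term of the Taylor polynomial is `g 0 = 0`.
  rw [FormalMultilinearSeries.partialSum, Finset.sum_range_succ, Finset.range_eq_Ico,
    Finset.sum_eq_sum_Ico_succ_bot (by omega : 0 < r)]
  simp only [FormalMultilinearSeries.ofScalars_apply_eq, smul_eq_mul, iteratedDeriv_zero, hg0,
    zero_add]
  simp only [div_eq_mul_inv, zero_mul, zero_add, one_mul, sub_sub]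
  simp only [mul_comm]

/-- Two orbits of `kickMap` with a common initial condition and parameters `δ = a ε`, `δ = b ε`
such that `b ε - a ε = c ε^r + o(ε^r)`. That both orbits tend to the same point `(L, M)` is carried
through the induction: the local Lipschitz bound on `f` near `L` is what makes the nonlinear terms
of the difference negligible. -/
theorem kickMap_iterate_sub (f : ℝ → ℝ) (hf : ContDiff ℝ 1 f) (μ x₀ c : ℝ) (a b y : ℝ → ℝ)
    (r : ℕ) (ha : Tendsto a (𝓝 0) (𝓝 0)) (hb : Tendsto b (𝓝 0) (𝓝 0))
    (hy : Tendsto y (𝓝 0) (𝓝 0))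
    (hab : (fun ε => b ε - a ε - c * ε ^ r) =o[𝓝 (0 : ℝ)] (fun ε : ℝ => ε ^ r)) (k : ℕ) :
    (∃ L M : ℝ,
      Tendsto (fun ε => ((kickMap f μ (a ε) ε)^[k] (x₀, y ε)).1) (𝓝 0) (𝓝 L) ∧
      Tendsto (fun ε => ((kickMap f μ (b ε) ε)^[k] (x₀, y ε)).1) (𝓝 0) (𝓝 L) ∧
      Tendsto (fun ε => ((kickMap f μ (a ε) ε)^[k] (x₀, y ε)).2) (𝓝 0) (𝓝 M) ∧
      Tendsto (fun ε => ((kickMap f μ (b ε) ε)^[k] (x₀, y ε)).2) (𝓝 0) (𝓝 M)) ∧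
    (fun ε => ((kickMap f μ (a ε) ε)^[k] (x₀, y ε)).1
        - ((kickMap f μ (b ε) ε)^[k] (x₀, y ε)).1 - ((k : ℝ) * (k + 1) / 2) * c * ε ^ r)
      =o[𝓝 (0 : ℝ)] (fun ε : ℝ => ε ^ r) ∧
    (fun ε => ((kickMap f μ (a ε) ε)^[k] (x₀, y ε)).2
        - ((kickMap f μ (b ε) ε)^[k] (x₀, y ε)).2 - (k : ℝ) * c * ε ^ r)
      =o[𝓝 (0 : ℝ)] (fun ε : ℝ => ε ^ r) := by
  induction k with
  | zero =>
    refine ⟨⟨x₀, 0, ?_, ?_, ?_, ?_⟩, ?_, ?_⟩ <;> simp [hy]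
  | succ k ih =>
    obtain ⟨⟨L, M, ha1, hb1, ha2, hb2⟩, h1, h2⟩ := ih
    simp only [Function.iterate_succ_apply']
    generalize hu : (fun ε => (kickMap f μ (a ε) ε)^[k] (x₀, y ε)) = u at *
    generalize hv : (fun ε => (kickMap f μ (b ε) ε)^[k] (x₀, y ε)) = v at *
    have hu' : ∀ ε, (kickMap f μ (a ε) ε)^[k] (x₀, y ε) = u ε := fun ε => congrFun hu ε
    have hv' : ∀ ε, (kickMap f μ (b ε) ε)^[k] (x₀, y ε) = v ε := fun ε => congrFun hv ε
    simp only [hu', hv', kickMap] at *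
    have hid : Tendsto (fun ε : ℝ => ε) (𝓝 0) (𝓝 0) := tendsto_id
    have hfa := (hf.continuous.tendsto L).comp ha1
    have hfb := (hf.continuous.tendsto L).comp hb1
    have hga := ha.neg.sub (hid.mul hfa)
    have hgb := hb.neg.sub (hid.mul hfb)
    -- The difference of the first coordinates is `O(ε^r)`, hence so is that of the values of `f`.
    have hO : (fun ε => (u ε).1 - (v ε).1) =O[𝓝 0] (fun ε : ℝ => ε ^ r) :=
      (h1.isBigO.add (isBigO_const_mul_self (((k : ℝ) * (k + 1) / 2) * c)
        (fun ε : ℝ => ε ^ r) (𝓝 0))).congr_left fun ε => by ring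
    have hfO : (fun ε => f (u ε).1 - f (v ε).1) =O[𝓝 0] (fun ε : ℝ => ε ^ r) :=
      ((hf.contDiffAt.hasStrictFDerivAt one_ne_zero).isBigO_sub.comp_tendsto
        (ha1.prodMk_nhds hb1)).trans hO
    have hεf : (fun ε => ε * (f (u ε).1 - f (v ε).1)) =o[𝓝 0] (fun ε : ℝ => ε ^ r) := by
      have h := ((isLittleO_one_iff ℝ).2 hid).mul_isBigO hfO
      simpa only [one_mul] using h
    have h2' := (h2.add hab).sub hεf
    refine ⟨⟨L + M + μ + (-0 - 0 * f L), M + (-0 - 0 * f L), ?_, ?_, ?_, ?_⟩, ?_, ?_⟩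
    · exact ((ha1.add ha2).add_const μ).add hga
    · exact ((hb1.add hb2).add_const μ).add hgb
    · exact ha2.add hga
    · exact hb2.add hgb
    · refine (h1.add h2').congr_left fun ε => ?_
      push_cast
      ring
    · refine h2'.congr_left fun ε => ?_
      push_cast
      ring

/-- Leading behavior of the remainders when `Δ` is replaced by its constant part `A(ε)`.
With `μ = 2πp/q`, `g(x) = −δ − ε f(x)`, `G_{ε,δ}(x,y) = (x + y + μ + g(x), y + g(x))`,
`R_q(x₀,y₀,ε,δ) = x_q − x₀ − qμ`, `S_q = y_q − y₀`: if `Δ(x,ε)`, `Y(x,ε)` vanish at `ε = 0`,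
are analytic in `ε`, satisfy `R_q(x, Y(x,ε), ε, Δ(x,ε)) = S_q(x, Y(x,ε), ε, Δ(x,ε)) = 0`,
and if the Taylor coefficients `Δ_m(x) = (1/m!)∂^m_ε Δ(x,0)` are independent of `x` for
`1 ≤ m ≤ r−1`, then with `A(ε) = ∑_{m=1}^{r−1} Δ_m ε^m` and `Δ_r(x₀) = (1/r!)∂^r_ε Δ(x₀,0)`:
`R_q(x₀, Y(x₀,ε), ε, A(ε)) = (q(q+1)/2)·Δ_r(x₀)·ε^r + o(ε^r)` and
`S_q(x₀, Y(x₀,ε), ε, A(ε)) = q·Δ_r(x₀)·ε^r + o(ε^r)` as `ε → 0`. -/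
theorem remainders_at_constant_part
    (p q : ℕ) (hp : 0 < p) (hq : 0 < q)
    (f : ℝ → ℝ) (hper : ∀ x : ℝ, f (x + 2 * π) = f x)
    (hfa : AnalyticOnNhd ℝ f Set.univ)
    (εbar : ℝ) (hεbar : 0 < εbar)
    (Δ Y : ℝ → ℝ → ℝ)
    (h0 : ∀ x : ℝ, Δ x 0 = 0 ∧ Y x 0 = 0)
    (hanal : ∀ x : ℝ, AnalyticOnNhd ℝ (Δ x) (Set.Ioo (-εbar) εbar) ∧
                      AnalyticOnNhd ℝ (Y x) (Set.Ioo (-εbar) εbar))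
    (hRS : ∀ x ε : ℝ, |ε| < εbar →
      (fun z : ℝ × ℝ =>
          (z.1 + z.2 + 2 * π * p / q + (-(Δ x ε) - ε * f z.1),
           z.2 + (-(Δ x ε) - ε * f z.1)))^[q] (x, Y x ε)
        = (x + (q : ℝ) * (2 * π * p / q), Y x ε))
    (x₀ : ℝ) (r : ℕ) (hr : 1 ≤ r)
    (hconst : ∀ m : ℕ, 1 ≤ m → m ≤ r - 1 → ∀ x x' : ℝ,
      (1 / (m.factorial : ℝ)) * iteratedDeriv m (Δ x) 0
        = (1 / (m.factorial : ℝ)) * iteratedDeriv m (Δ x') 0)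
    (A : ℝ → ℝ)
    (hA : ∀ ε : ℝ, A ε = ∑ m ∈ Finset.Ico 1 r,
      ((1 / (m.factorial : ℝ)) * iteratedDeriv m (Δ x₀) 0) * ε ^ m)
    (Δr : ℝ) (hΔr : Δr = (1 / (r.factorial : ℝ)) * iteratedDeriv r (Δ x₀) 0) :
    (fun ε : ℝ =>
        ((fun z : ℝ × ℝ =>
            (z.1 + z.2 + 2 * π * p / q + (-(A ε) - ε * f z.1),
             z.2 + (-(A ε) - ε * f z.1)))^[q] (x₀, Y x₀ ε)).1
          - x₀ - (q : ℝ) * (2 * π * p / q)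
          - ((q : ℝ) * ((q : ℝ) + 1) / 2) * Δr * ε ^ r)
      =o[𝓝 (0 : ℝ)] (fun ε : ℝ => ε ^ r) ∧
    (fun ε : ℝ =>
        ((fun z : ℝ × ℝ =>
            (z.1 + z.2 + 2 * π * p / q + (-(A ε) - ε * f z.1),
             z.2 + (-(A ε) - ε * f z.1)))^[q] (x₀, Y x₀ ε)).2
          - Y x₀ ε - (q : ℝ) * Δr * ε ^ r)
      =o[𝓝 (0 : ℝ)] (fun ε : ℝ => ε ^ r) := by
  have hmem : (0 : ℝ) ∈ Set.Ioo (-εbar) εbar := ⟨by linarith, hεbar⟩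
  have hΔa := (hanal x₀).1 0 hmem
  have hYa := (hanal x₀).2 0 hmem
  have hf : ContDiff ℝ 1 f := contDiff_iff_contDiffAt.2 fun x => (hfa x trivial).contDiffAt
  have hb : Tendsto (Δ x₀) (𝓝 0) (𝓝 0) := by
    simpa only [(h0 x₀).1] using hΔa.continuousAt.tendsto
  have hy : Tendsto (Y x₀) (𝓝 0) (𝓝 0) := by
    simpa only [(h0 x₀).2] using hYa.continuousAt.tendsto
  have ha : Tendsto A (𝓝 0) (𝓝 0) := by
    have hc : Continuous A := by
      rw [funext hA]
      fun_prop
    have hA0 : A 0 = 0 := by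
      rw [hA]
      refine Finset.sum_eq_zero fun m hm => ?_
      have := (Finset.mem_Ico.1 hm).1
      simp [show m ≠ 0 by omega]
    simpa only [hA0] using hc.tendsto 0
  have hab : (fun ε => Δ x₀ ε - A ε - Δr * ε ^ r) =o[𝓝 (0 : ℝ)] (fun ε : ℝ => ε ^ r) := by
    simp only [hA, hΔr]
    exact taylor_tail_isLittleO (Δ x₀) hΔa (h0 x₀).1 r hr
  obtain ⟨-, h1, h2⟩ :=
    kickMap_iterate_sub f hf (2 * π * p / q) x₀ Δr A (Δ x₀) (Y x₀) r ha hb hy hab q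
  have hclosed : ∀ᶠ ε in 𝓝 (0 : ℝ), (kickMap f (2 * π * p / q) (Δ x₀ ε) ε)^[q] (x₀, Y x₀ ε)
      = (x₀ + (q : ℝ) * (2 * π * p / q), Y x₀ ε) := by
    filter_upwards [Ioo_mem_nhds hmem.1 hmem.2] with ε hε
    exact hRS x₀ ε (abs_lt.2 hε)
  refine ⟨h1.congr' ?_ EventuallyEq.rfl, h2.congr' ?_ EventuallyEq.rfl⟩
  · filter_upwards [hclosed] with ε hε
    rw [hε, ← sub_sub]
    rfl
  · filter_upwards [hclosed] with ε hε
    rw [hε]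
    rfl
end
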